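/- Let M ×_{ρ,σ} C be a crossed product algebra associated to entwining data (P, C, ψ, e, ψ^C), and let γ : C → M be convolution invertible with γ(e) = 1 and ψ^C₂₃∘ψ₁₂∘(id_C ⊗ γ ⊗ id_C)∘(id_C ⊗ Δ) = (γ ⊗ id_C ⊗ id_C)∘(Δ ⊗ id_C)∘ψ^C. Define ρ^γ(c ⊗ u) = γ(c₍₁₎) ρ(c₍₂₎ ⊗ u_α) γ⁻¹(c₍₃₎^α) and σ^γ(b ⊗ c) = γ(b₍₁₎) ρ(b₍₂₎ ⊗ γ(c_A₍₁₎)_α) σ(b₍₃₎^α ⊗ c_A₍₂₎) γ⁻¹(b₍₄₎^A). Then (ρ^γ, σ^γ) are crossed product data (satisfy (i)–(iv) and associativity conditions), and the map Θ : M ⊗ C → M ×_{ρ,σ} C, Θ(x ⊗ c) = x γ(c₍₁₎) ⊗ c₍₂₎, is an algebra isomorphism from M ×_{ρ^γ,σ^γ} C onto M ×_{ρ,σ} C. -/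

import Mathlib

open TensorProduct LinearMap

noncomputable section

namespace Entwine

variable (k : Type) [Field k] (P : Type) [Ring P] [Algebra k P]
  (C : Type) [AddCommGroup C] [Module k C] [Coalgebra k C]

/-- coproduct of `C` -/
abbrev Δ : C →ₗ[k] C ⊗[k] C := Coalgebra.comul
/-- counit of `C` -/
abbrev ε : C →ₗ[k] k := Coalgebra.counit
/-- multiplication of `P` -/
abbrev μ : P ⊗[k] P →ₗ[k] P := LinearMap.mul' k P

variable (ψ : C ⊗[k] P →ₗ[k] P ⊗[k] C)

/-- entwining axiom `ψ∘(id⊗μ) = (μ⊗id)∘ψ₂₃∘ψ₁₂` -/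
def AxMul : Prop :=
  ψ ∘ₗ map LinearMap.id (μ k P) =
    map (μ k P) LinearMap.id
      ∘ₗ (TensorProduct.assoc k P P C).symm.toLinearMap
      ∘ₗ map LinearMap.id ψ
      ∘ₗ (TensorProduct.assoc k P C P).toLinearMap
      ∘ₗ map ψ LinearMap.id
      ∘ₗ (TensorProduct.assoc k C P P).symm.toLinearMap

/-- entwining axiom `ψ(c ⊗ 1) = 1 ⊗ c` -/
def AxOne : Prop := ∀ c : C, ψ (c ⊗ₜ (1 : P)) = (1 : P) ⊗ₜ c

/-- entwining axiom `(id⊗Δ)∘ψ = ψ₁₂∘ψ₂₃∘(Δ⊗id)` -/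
def AxComul : Prop :=
  map LinearMap.id (Δ k C) ∘ₗ ψ =
    (TensorProduct.assoc k P C C).toLinearMap
      ∘ₗ map ψ LinearMap.id
      ∘ₗ (TensorProduct.assoc k C P C).symm.toLinearMap
      ∘ₗ map LinearMap.id ψ
      ∘ₗ (TensorProduct.assoc k C C P).toLinearMap
      ∘ₗ map (Δ k C) LinearMap.id

/-- entwining axiom `(id⊗ε)∘ψ = ε⊗id` -/
def AxCounit : Prop :=
  (TensorProduct.rid k P).toLinearMap ∘ₗ map LinearMap.id (ε k C) ∘ₗ ψ =
    (TensorProduct.lid k P).toLinearMap ∘ₗ map (ε k C) LinearMap.id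

/-- `ψ` is an entwining map for the algebra `P` and the coalgebra `C` -/
def IsEntwining : Prop :=
  AxMul k P C ψ ∧ AxOne k P C ψ ∧ AxComul k P C ψ ∧ AxCounit k P C ψ

variable (e : C)

/-- `e` is a group-like element -/
def IsGrouplike : Prop :=
  Δ k C e = e ⊗ₜ[k] e ∧ ε k C e = 1

variable (ψC : C ⊗[k] C →ₗ[k] C ⊗[k] C)

/-- `(id⊗Δ)∘ψ^C = ψ^C₁₂∘ψ^C₂₃∘(Δ⊗id)` -/
def AxPsiCComul : Prop :=
  map LinearMap.id (Δ k C) ∘ₗ ψC =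
    (TensorProduct.assoc k C C C).toLinearMap
      ∘ₗ map ψC LinearMap.id
      ∘ₗ (TensorProduct.assoc k C C C).symm.toLinearMap
      ∘ₗ map LinearMap.id ψC
      ∘ₗ (TensorProduct.assoc k C C C).toLinearMap
      ∘ₗ map (Δ k C) LinearMap.id

/-- `(id⊗ε)∘ψ^C = ε⊗id` -/
def AxPsiCCounit : Prop :=
  (TensorProduct.rid k C).toLinearMap ∘ₗ map LinearMap.id (ε k C) ∘ₗ ψC =
    (TensorProduct.lid k C).toLinearMap ∘ₗ map (ε k C) LinearMap.id

/-- `ψ^C(e ⊗ c) = Δc` -/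
def AxPsiCUnit : Prop := ∀ c : C, ψC (e ⊗ₜ[k] c) = Δ k C c

/-- `(P, C, ψ, e, ψ^C)` form entwining data -/
def IsEntwiningData : Prop :=
  IsEntwining k P C ψ ∧ IsGrouplike k C e ∧
    AxPsiCComul k C ψC ∧ AxPsiCCounit k C ψC ∧ AxPsiCUnit k C e ψC

/-- the right coaction `Δ_R u = ψ(e ⊗ u)` on `P` -/
def deltaR : P →ₗ[k] P ⊗[k] C := ψ ∘ₗ TensorProduct.mk k C P e

/-- the fixed point subspace `M = P^{coC}_e`, as a submodule of `P` -/
def Msub : Submodule k P where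
  carrier := {x : P | ψ (e ⊗ₜ x) = x ⊗ₜ e}
  add_mem' := by
    intro a b ha hb
    simp only [Set.mem_setOf_eq] at *
    rw [TensorProduct.tmul_add, map_add, ha, hb, TensorProduct.add_tmul]
  zero_mem' := by
    simp only [Set.mem_setOf_eq, TensorProduct.tmul_zero, map_zero,
      TensorProduct.zero_tmul]
  smul_mem' := by
    intro r x hx
    simp only [Set.mem_setOf_eq] at *
    rw [TensorProduct.tmul_smul, map_smul, hx, TensorProduct.smul_tmul']

/-- the subspace `M ⊗ C` of `P ⊗ C` -/
def MCsub : Submodule k (P ⊗[k] C) :=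
  LinearMap.range (map (Msub k P C ψ e).subtype (LinearMap.id : C →ₗ[k] C))

variable (ρ : C ⊗[k] P →ₗ[k] P) (σ : C ⊗[k] C →ₗ[k] P)

/-- the map `ρ̂ : c ⊗ x ↦ ρ(c₍₁₎ ⊗ x_α) ⊗ c₍₂₎^α` -/
def rhat : C ⊗[k] P →ₗ[k] P ⊗[k] C :=
  map ρ LinearMap.id
    ∘ₗ (TensorProduct.assoc k C P C).symm.toLinearMap
    ∘ₗ map LinearMap.id ψ
    ∘ₗ (TensorProduct.assoc k C C P).toLinearMap
    ∘ₗ map (Δ k C) LinearMap.id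

/-- the map `σ̂ : b ⊗ c ↦ σ(b₍₁₎ ⊗ c_A) ⊗ b₍₂₎^A` -/
def shat : C ⊗[k] C →ₗ[k] P ⊗[k] C :=
  map σ LinearMap.id
    ∘ₗ (TensorProduct.assoc k C C C).symm.toLinearMap
    ∘ₗ map LinearMap.id ψC
    ∘ₗ (TensorProduct.assoc k C C C).toLinearMap
    ∘ₗ map (Δ k C) LinearMap.id

/-- multiplication of the first two factors: `x ⊗ (y ⊗ c) ↦ xy ⊗ c` -/
def mulPC : P ⊗[k] (P ⊗[k] C) →ₗ[k] P ⊗[k] C :=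
  map (μ k P) LinearMap.id ∘ₗ (TensorProduct.assoc k P P C).symm.toLinearMap

/-- the crossed product `(x ⊗ b)(y ⊗ c) = xρ(b₍₁₎⊗y_α)σ(b₍₂₎^α₍₁₎⊗c_A) ⊗ b₍₂₎^α₍₂₎^A` -/
def prodX : (P ⊗[k] C) ⊗[k] (P ⊗[k] C) →ₗ[k] P ⊗[k] C :=
  mulPC k P C
    ∘ₗ map LinearMap.id (mulPC k P C)
    ∘ₗ map LinearMap.id
        (map LinearMap.id (shat k P C ψC σ)
          ∘ₗ (TensorProduct.assoc k P C C).toLinearMap)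
    ∘ₗ map LinearMap.id
        (map (rhat k P C ψ ρ) LinearMap.id
          ∘ₗ (TensorProduct.assoc k C P C).symm.toLinearMap)
    ∘ₗ (TensorProduct.assoc k P C (P ⊗[k] C)).toLinearMap

/-- condition (i): `ρ(e,x) = x` for `x ∈ M` and `ρ(c,1) = ε(c)1` -/
def CondI : Prop :=
  (∀ x : P, x ∈ Msub k P C ψ e → ρ (e ⊗ₜ x) = x) ∧
    ∀ c : C, ρ (c ⊗ₜ (1 : P)) = ε k C c • (1 : P)

/-- condition (ii): `ρ̂` maps `C ⊗ M` into `M ⊗ C` -/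
def CondII : Prop :=
  ∀ (c : C) (x : P), x ∈ Msub k P C ψ e →
    rhat k P C ψ ρ (c ⊗ₜ x) ∈ MCsub k P C ψ e

/-- the right hand side of condition (iii): `(μ⊗id)∘(id⊗ρ̂)∘(ρ̂⊗id)` -/
def BmapIII : C ⊗[k] (P ⊗[k] P) →ₗ[k] P ⊗[k] C :=
  mulPC k P C
    ∘ₗ map LinearMap.id (rhat k P C ψ ρ)
    ∘ₗ (TensorProduct.assoc k P C P).toLinearMap
    ∘ₗ map (rhat k P C ψ ρ) LinearMap.id
    ∘ₗ (TensorProduct.assoc k C P P).symm.toLinearMap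

/-- condition (iii): twisted multiplicativity of `ρ` -/
def CondIII : Prop :=
  ∀ (c : C) (x y : P), x ∈ Msub k P C ψ e → y ∈ Msub k P C ψ e →
    rhat k P C ψ ρ (c ⊗ₜ (x * y)) = BmapIII k P C ψ ρ (c ⊗ₜ (x ⊗ₜ y))

/-- `σ` takes values in `M` -/
def SigmaIntoM : Prop := ∀ b c : C, σ (b ⊗ₜ c) ∈ Msub k P C ψ e

/-- condition (iv): `σ(e⊗c) = ε(c)1` and `σ(c₍₁₎⊗e_A) ⊗ c₍₂₎^A = 1 ⊗ c` -/
def CondIV : Prop :=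
  (∀ c : C, σ (e ⊗ₜ c) = ε k C c • (1 : P)) ∧
    ∀ c : C, shat k P C ψC σ (c ⊗ₜ e) = (1 : P) ⊗ₜ c

/-- `(ρ, σ)` are crossed product data: conditions (i)–(iv). -/
def IsCrossedData : Prop :=
  CondI k P C ψ e ρ ∧ CondII k P C ψ e ρ ∧ CondIII k P C ψ e ρ ∧
    SigmaIntoM k P C ψ e σ ∧ CondIV k P C e ψC σ

/-- left hand side of the cocycle condition (2.6) -/
def CocLHS : C ⊗[k] (C ⊗[k] C) →ₗ[k] P ⊗[k] C :=
  mulPC k P C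
    ∘ₗ map LinearMap.id (shat k P C ψC σ)
    ∘ₗ (TensorProduct.assoc k P C C).toLinearMap
    ∘ₗ map (rhat k P C ψ ρ) LinearMap.id
    ∘ₗ (TensorProduct.assoc k C P C).symm.toLinearMap
    ∘ₗ map LinearMap.id (shat k P C ψC σ)

/-- right hand side of the cocycle condition (2.6) -/
def CocRHS : C ⊗[k] (C ⊗[k] C) →ₗ[k] P ⊗[k] C :=
  mulPC k P C
    ∘ₗ map LinearMap.id (shat k P C ψC σ)
    ∘ₗ (TensorProduct.assoc k P C C).toLinearMap
    ∘ₗ map (shat k P C ψC σ) LinearMap.id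
    ∘ₗ (TensorProduct.assoc k C C C).symm.toLinearMap

/-- the cocycle condition (2.6) -/
def Cocycle : Prop := CocLHS k P C ψ ψC ρ σ = CocRHS k P C ψC σ

/-- left hand side of the twisted module condition (2.7) -/
def TwLHS : C ⊗[k] (C ⊗[k] P) →ₗ[k] P ⊗[k] C :=
  mulPC k P C
    ∘ₗ map LinearMap.id (shat k P C ψC σ)
    ∘ₗ (TensorProduct.assoc k P C C).toLinearMap
    ∘ₗ map (rhat k P C ψ ρ) LinearMap.id
    ∘ₗ (TensorProduct.assoc k C P C).symm.toLinearMap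
    ∘ₗ map LinearMap.id (rhat k P C ψ ρ)

/-- right hand side of the twisted module condition (2.7) -/
def TwRHS : C ⊗[k] (C ⊗[k] P) →ₗ[k] P ⊗[k] C :=
  mulPC k P C
    ∘ₗ map LinearMap.id (rhat k P C ψ ρ)
    ∘ₗ (TensorProduct.assoc k P C P).toLinearMap
    ∘ₗ map (shat k P C ψC σ) LinearMap.id
    ∘ₗ (TensorProduct.assoc k C C P).symm.toLinearMap

/-- the twisted module condition (2.7), for `x ∈ M` -/
def Twisted : Prop :=
  ∀ (a b : C) (x : P), x ∈ Msub k P C ψ e →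
    TwLHS k P C ψ ψC ρ σ (a ⊗ₜ (b ⊗ₜ x)) = TwRHS k P C ψ ψC ρ σ (a ⊗ₜ (b ⊗ₜ x))

end Entwine

namespace Entwine

section Gauge
variable (k : Type) [Field k] (P : Type) [Ring P] [Algebra k P]
    (C : Type) [AddCommGroup C] [Module k C] [Coalgebra k C]
    (ψ : C ⊗[k] P →ₗ[k] P ⊗[k] C) (e : C) (ψC : C ⊗[k] C →ₗ[k] C ⊗[k] C)
    (ρ : C ⊗[k] P →ₗ[k] P) (σ : C ⊗[k] C →ₗ[k] P)
    (γ γi : C →ₗ[k] P)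

/-- the covariance condition (2.16) for a gauge transformation `γ`:
`ψ^C₂₃∘ψ₁₂∘(id⊗γ⊗id)∘(id⊗Δ) = (γ⊗id⊗id)∘(Δ⊗id)∘ψ^C` -/
def Cov216 : Prop :=
  map LinearMap.id ψC
      ∘ₗ (TensorProduct.assoc k P C C).toLinearMap
      ∘ₗ map ψ LinearMap.id
      ∘ₗ (TensorProduct.assoc k C P C).symm.toLinearMap
      ∘ₗ map LinearMap.id (map γ LinearMap.id)
      ∘ₗ map LinearMap.id (Δ k C) =
    map γ LinearMap.id
      ∘ₗ (TensorProduct.assoc k C C C).toLinearMap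
      ∘ₗ map (Δ k C) LinearMap.id
      ∘ₗ ψC

/-- `ρ^γ(c ⊗ u) = γ(c₍₁₎) ρ(c₍₂₎ ⊗ u_α) γ⁻¹(c₍₃₎^α)` -/
def rhoGamma : C ⊗[k] P →ₗ[k] P :=
  μ k P
    ∘ₗ map γ (μ k P)
    ∘ₗ map LinearMap.id (map ρ γi)
    ∘ₗ map LinearMap.id (TensorProduct.assoc k C P C).symm.toLinearMap
    ∘ₗ map LinearMap.id (map LinearMap.id ψ)
    ∘ₗ map LinearMap.id (TensorProduct.assoc k C C P).toLinearMap
    ∘ₗ (TensorProduct.assoc k C (C ⊗[k] C) P).toLinearMap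
    ∘ₗ map (map LinearMap.id (Δ k C) ∘ₗ Δ k C) LinearMap.id

/-- `σ^γ(b ⊗ c) = γ(b₍₁₎) ρ(b₍₂₎ ⊗ γ(c_A₍₁₎)_α) σ(b₍₃₎^α ⊗ c_A₍₂₎) γ⁻¹(b₍₄₎^A)` -/
def sigmaGamma : C ⊗[k] C →ₗ[k] P :=
  μ k P
    ∘ₗ map γ LinearMap.id
    ∘ₗ map LinearMap.id (μ k P)
    ∘ₗ map LinearMap.id (map ρ (μ k P))
    ∘ₗ map LinearMap.id (TensorProduct.assoc k C P (P ⊗[k] P)).symm.toLinearMap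
    ∘ₗ map LinearMap.id (map LinearMap.id (map LinearMap.id (map σ γi)))
    ∘ₗ map LinearMap.id (map LinearMap.id
        (map LinearMap.id (TensorProduct.assoc k C C C).symm.toLinearMap))
    ∘ₗ map LinearMap.id (map LinearMap.id
        (TensorProduct.assoc k P C (C ⊗[k] C)).toLinearMap)
    ∘ₗ map LinearMap.id (map LinearMap.id (map ψ LinearMap.id))
    ∘ₗ map LinearMap.id (map LinearMap.id
        (TensorProduct.assoc k C P (C ⊗[k] C)).symm.toLinearMap)
    ∘ₗ map LinearMap.id (map LinearMap.id
        (map LinearMap.id (map γ LinearMap.id)))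
    ∘ₗ map LinearMap.id (map LinearMap.id
        (map LinearMap.id (TensorProduct.assoc k C C C).toLinearMap))
    ∘ₗ map LinearMap.id (map LinearMap.id
        (map LinearMap.id (map (Δ k C) LinearMap.id)))
    ∘ₗ map LinearMap.id (map LinearMap.id (map LinearMap.id ψC))
    ∘ₗ map LinearMap.id (map LinearMap.id (TensorProduct.assoc k C C C).toLinearMap)
    ∘ₗ map LinearMap.id (TensorProduct.assoc k C (C ⊗[k] C) C).toLinearMap
    ∘ₗ (TensorProduct.assoc k C (C ⊗[k] (C ⊗[k] C)) C).toLinearMap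
    ∘ₗ map (map LinearMap.id (map LinearMap.id (Δ k C))
        ∘ₗ map LinearMap.id (Δ k C) ∘ₗ Δ k C) LinearMap.id

/-- `Θ : x ⊗ c ↦ x γ(c₍₁₎) ⊗ c₍₂₎` -/
def ThetaGamma : P ⊗[k] C →ₗ[k] P ⊗[k] C :=
  mulPC k P C
    ∘ₗ map LinearMap.id (map γ LinearMap.id)
    ∘ₗ map LinearMap.id (Δ k C)

end Gauge

end Entwine

/-!
Crossed product data amount to a left `P`-linear product on `P ⊗ C` whose restriction to `M ⊗ C`
is associative with unit `1 ⊗ e`: the operators `R y` and `S c` of right multiplication by `y ⊗ e`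
and `1 ⊗ c` determine `ρ` and `σ`, and conditions (i)–(iv), the cocycle condition and the twisted
module condition say exactly that these operators come from such a product. The map `Θ` is a left
`P`-linear automorphism of `P ⊗ C` that preserves `M ⊗ C` and fixes `1 ⊗ e`, so the product can be
pulled back along it. It remains to see that the pulled back product comes from `ρ^γ` and `σ^γ`. A
map into the cofree comodule `P ⊗ C` that is colinear is determined by its composite with
`id ⊗ ε`, and the right multiplications of the pulled back product are colinear (for `S` this is
the covariance of `γ`), so it is enough to compare these composites.
-/

namespace Entwine

section Colinear

variable {R C U V W X Y : Type*} [CommSemiring R] [AddCommMonoid C] [Module R C]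
  [AddCommMonoid U] [Module R U] [AddCommMonoid V] [Module R V] [AddCommMonoid W] [Module R W]
  [AddCommMonoid X] [Module R X] [AddCommMonoid Y] [Module R Y]

/-- A map is colinear if it intertwines the given right `C`-coactions on its source and target.
Coactions are bare linear maps; coassociativity and counitality are assumed only where needed. -/
def IsColinear (δV : V →ₗ[R] V ⊗[R] C) (δW : W →ₗ[R] W ⊗[R] C) (f : V →ₗ[R] W) : Prop :=
  δW ∘ₗ f = f.rTensor C ∘ₗ δV

variable (U) in
/-- The coaction of `C` on the second factor of `U ⊗ V`. For `V = C` coacting on itself by the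
comultiplication this is the cofree comodule on `U`. -/
def lTensorCoaction (δ : V →ₗ[R] W ⊗[R] C) : U ⊗[R] V →ₗ[R] (U ⊗[R] W) ⊗[R] C :=
  (TensorProduct.assoc R U W C).symm.toLinearMap ∘ₗ δ.lTensor U

/-- The coaction `u ⊗ x ↦ (u₍₀₎ ⊗ x_α) ⊗ u₍₁₎^α` on `U ⊗ X`, where the coaction on `U` is moved
past `X` by the map `χ(c ⊗ x) = x_α ⊗ c^α`. -/
def tensorCoaction (δ : U →ₗ[R] V ⊗[R] C) (χ : C ⊗[R] X →ₗ[R] X ⊗[R] C) :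
    U ⊗[R] X →ₗ[R] (V ⊗[R] X) ⊗[R] C :=
  lTensorCoaction V χ ∘ₗ (TensorProduct.assoc R V C X).toLinearMap ∘ₗ δ.rTensor X

/-- Moving `C` past `X ⊗ Y`, one factor at a time. -/
def entwineTensor (χ : C ⊗[R] X →ₗ[R] X ⊗[R] C) (η : C ⊗[R] Y →ₗ[R] Y ⊗[R] C) :
    C ⊗[R] (X ⊗[R] Y) →ₗ[R] (X ⊗[R] Y) ⊗[R] C :=
  tensorCoaction χ η ∘ₗ (TensorProduct.assoc R C X Y).symm.toLinearMap

variable {δU : U →ₗ[R] U ⊗[R] C} {δV : V →ₗ[R] V ⊗[R] C} {δW : W →ₗ[R] W ⊗[R] C}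
  {χ : C ⊗[R] X →ₗ[R] X ⊗[R] C} {η : C ⊗[R] Y →ₗ[R] Y ⊗[R] C}

theorem IsColinear.comp {g : V →ₗ[R] W} {f : U →ₗ[R] V} (hg : IsColinear δV δW g)
    (hf : IsColinear δU δV f) : IsColinear δU δW (g ∘ₗ f) := by
  rw [IsColinear, ← comp_assoc, hg, comp_assoc, hf, rTensor_comp, comp_assoc]

theorem IsColinear.lTensor {f : V →ₗ[R] W} (hf : IsColinear δV δW f) :
    IsColinear (lTensorCoaction U δV) (lTensorCoaction U δW) (f.lTensor U) := by
  have h := congrArg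
    (fun g ↦ (TensorProduct.assoc R U W C).symm.toLinearMap ∘ₗ LinearMap.lTensor U g) hf
  simpa [IsColinear, lTensorCoaction, coassoc_simps] using h

theorem isColinear_rTensor (δ : V →ₗ[R] V ⊗[R] C) (φ : U →ₗ[R] W) :
    IsColinear (lTensorCoaction U δ) (lTensorCoaction W δ) (φ.rTensor V) := by
  simp [IsColinear, lTensorCoaction, coassoc_simps]

theorem IsColinear.rTensor {f : V →ₗ[R] W} (hf : IsColinear δV δW f) :
    IsColinear (tensorCoaction δV χ) (tensorCoaction δW χ) (f.rTensor X) := by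
  have h := congrArg (fun g ↦ tensorCoaction .id χ ∘ₗ LinearMap.rTensor X g) hf
  simpa [IsColinear, tensorCoaction, lTensorCoaction, coassoc_simps] using h

theorem isColinear_lTensor {j : X →ₗ[R] Y} (δ : V →ₗ[R] V ⊗[R] C)
    (hj : η ∘ₗ j.lTensor C = j.rTensor C ∘ₗ χ) :
    IsColinear (tensorCoaction δ χ) (tensorCoaction δ η) (j.lTensor V) := by
  have h := congrArg
    (fun g ↦ lTensorCoaction V g ∘ₗ TensorProduct.assoc R V C X ∘ₗ LinearMap.rTensor X δ) hj
  simpa [IsColinear, tensorCoaction, lTensorCoaction, coassoc_simps] using h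

theorem isColinear_assoc_symm_lTensorCoaction (δ : V →ₗ[R] V ⊗[R] C) :
    IsColinear (lTensorCoaction U (lTensorCoaction X δ)) (lTensorCoaction (U ⊗[R] X) δ)
      (TensorProduct.assoc R U X V).symm.toLinearMap := by
  ext u x v
  simp only [lTensorCoaction, AlgebraTensorModule.curry_apply, curry_apply, coe_restrictScalars,
    coe_comp, LinearEquiv.coe_coe, Function.comp_apply, assoc_symm_tmul, lTensor_tmul]
  induction δ v with
  | zero => simp
  | add s t hs ht => simp only [tmul_add, map_add, hs, ht]
  | tmul w c => rfl

variable (U) in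
theorem isColinear_assoc (δ : V →ₗ[R] V ⊗[R] C) (χ : C ⊗[R] X →ₗ[R] X ⊗[R] C) :
    IsColinear (tensorCoaction (lTensorCoaction U δ) χ) (lTensorCoaction U (tensorCoaction δ χ))
      (TensorProduct.assoc R U V X).toLinearMap := by
  ext u v x
  simp only [tensorCoaction, lTensorCoaction, AlgebraTensorModule.curry_apply, curry_apply,
    coe_restrictScalars, coe_comp, LinearEquiv.coe_coe, Function.comp_apply, assoc_tmul,
    lTensor_tmul, rTensor_tmul]
  induction δ v with
  | zero => simp
  | add s t hs ht => simp [add_tmul, tmul_add, hs, ht]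
  | tmul w c =>
    simp only [assoc_tmul, assoc_symm_tmul, lTensor_tmul]
    induction χ (c ⊗ₜ x) with
    | zero => simp
    | add s t hs ht => simp [tmul_add, hs, ht]
    | tmul y d => simp

theorem isColinear_assoc_symm (δ : V →ₗ[R] V ⊗[R] C) (χ : C ⊗[R] X →ₗ[R] X ⊗[R] C)
    (η : C ⊗[R] Y →ₗ[R] Y ⊗[R] C) :
    IsColinear (tensorCoaction δ (entwineTensor χ η)) (tensorCoaction (tensorCoaction δ χ) η)
      (TensorProduct.assoc R V X Y).symm.toLinearMap := by
  ext v x y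
  simp only [entwineTensor, tensorCoaction, lTensorCoaction, AlgebraTensorModule.curry_apply,
    curry_apply, coe_restrictScalars, coe_comp, LinearEquiv.coe_coe, Function.comp_apply,
    assoc_symm_tmul, rTensor_tmul]
  induction δ v with
  | zero => simp
  | add s t hs ht => simp [add_tmul, hs, ht]
  | tmul w c =>
    simp only [assoc_tmul, assoc_symm_tmul, lTensor_tmul, rTensor_tmul, coe_comp,
      LinearEquiv.coe_coe, Function.comp_apply]
    induction χ (c ⊗ₜ x) with
    | zero => simp
    | add s t hs ht => simp [tmul_add, add_tmul, hs, ht]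
    | tmul z d =>
      simp only [assoc_tmul, assoc_symm_tmul, lTensor_tmul]
      induction η (d ⊗ₜ y) with
      | zero => simp
      | add s t hs ht => simp [tmul_add, hs, ht]
      | tmul z' d' => simp

end Colinear

section Cofree

variable {R C U V W X : Type*} [CommSemiring R] [AddCommMonoid C] [Module R C] [Coalgebra R C]
  [AddCommMonoid U] [Module R U] [AddCommMonoid V] [Module R V] [AddCommMonoid W] [Module R W]
  [AddCommMonoid X] [Module R X]

open Coalgebra

/-- The structure map of the cofree comodule: `id ⊗ ε` followed by `V ⊗ R ≃ V`. -/
def cofreeCounit (R C V : Type*) [CommSemiring R] [AddCommMonoid C] [Module R C] [Coalgebra R C]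
    [AddCommMonoid V] [Module R V] : V ⊗[R] C →ₗ[R] V :=
  (TensorProduct.rid R V).toLinearMap ∘ₗ (counit (R := R) (A := C)).lTensor V

@[simp]
theorem cofreeCounit_tmul (v : V) (c : C) :
    cofreeCounit R C V (v ⊗ₜ c) = counit (R := R) c • v := by
  simp [cofreeCounit]

theorem cofreeCounit_comp_rTensor (φ : V →ₗ[R] W) :
    cofreeCounit R C W ∘ₗ φ.rTensor C = φ ∘ₗ cofreeCounit R C V := by
  ext v c
  simp

theorem cofreeCounit_comp_tensorCoaction {δ : V →ₗ[R] V ⊗[R] C} {χ : C ⊗[R] X →ₗ[R] X ⊗[R] C}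
    (hδ : cofreeCounit R C V ∘ₗ δ = .id)
    (hχ : cofreeCounit R C X ∘ₗ χ =
      (TensorProduct.lid R X).toLinearMap ∘ₗ (counit (R := R) (A := C)).rTensor X) :
    cofreeCounit R C (V ⊗[R] X) ∘ₗ tensorCoaction δ χ = .id := by
  have counit_lTensorCoaction : cofreeCounit R C (V ⊗[R] X) ∘ₗ lTensorCoaction V χ =
      (cofreeCounit R C V).rTensor X ∘ₗ (TensorProduct.assoc R V C X).symm.toLinearMap := by
    have h : cofreeCounit R C (V ⊗[R] X) ∘ₗ (TensorProduct.assoc R V X C).symm.toLinearMap =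
        (cofreeCounit R C X).lTensor V := by
      ext v x c
      simp
    rw [lTensorCoaction, ← comp_assoc, h, ← lTensor_comp, hχ]
    ext v c x
    simp [smul_tmul]
  have h := congrArg (LinearMap.rTensor X) hδ
  rw [tensorCoaction, ← comp_assoc, counit_lTensorCoaction]
  ext v x
  simpa using DFunLike.congr_fun h (v ⊗ₜ x)

theorem isColinear_comul :
    IsColinear (comul (R := R)) (lTensorCoaction C comul) (comul (A := C)) := by
  ext c
  simp [lTensorCoaction, coassoc_symm_apply]

theorem IsColinear.tensorCoaction {δ : V →ₗ[R] V ⊗[R] C} {χ : C ⊗[R] X →ₗ[R] X ⊗[R] C}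
    (hδ : IsColinear δ (lTensorCoaction V comul) δ)
    (hχ : IsColinear (tensorCoaction comul χ) (lTensorCoaction X comul) χ) :
    IsColinear (tensorCoaction δ χ) (lTensorCoaction (V ⊗[R] X) comul) (tensorCoaction δ χ) := by
  have hassoc := isColinear_assoc_symm_lTensorCoaction (U := V) (X := X) (comul (R := R) (A := C))
  exact (hassoc.comp hχ.lTensor).comp ((isColinear_assoc V comul χ).comp hδ.rTensor)

theorem IsColinear.eq_rTensor_comp {δ : V →ₗ[R] V ⊗[R] C} {F : V →ₗ[R] W ⊗[R] C}
    (hF : IsColinear δ (lTensorCoaction W comul) F) :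
    F = (cofreeCounit R C W ∘ₗ F).rTensor C ∘ₗ δ := by
  have counit_left : (cofreeCounit R C W).rTensor C ∘ₗ lTensorCoaction W comul = .id := by
    have h : (cofreeCounit R C W).rTensor C ∘ₗ (TensorProduct.assoc R W C C).symm.toLinearMap =
        ((TensorProduct.lid R C).toLinearMap ∘ₗ counit.rTensor C).lTensor W := by
      ext w c d
      simp [smul_tmul]
    rw [lTensorCoaction, ← comp_assoc, h, ← lTensor_comp, comp_assoc, rTensor_counit_comp_comul]
    ext w c
    simp
  calc F = (cofreeCounit R C W).rTensor C ∘ₗ lTensorCoaction W comul ∘ₗ F := by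
        rw [← comp_assoc, counit_left, id_comp]
    _ = (cofreeCounit R C W ∘ₗ F).rTensor C ∘ₗ δ := by
        rw [hF, rTensor_comp, comp_assoc]

theorem isColinear_of_comul {χ : C ⊗[R] X →ₗ[R] X ⊗[R] C}
    (h : comul.lTensor X ∘ₗ χ =
      (TensorProduct.assoc R X C C).toLinearMap ∘ₗ χ.rTensor C ∘ₗ tensorCoaction comul χ) :
    IsColinear (tensorCoaction comul χ) (lTensorCoaction X comul) χ := by
  rw [IsColinear, lTensorCoaction, comp_assoc, h, ← comp_assoc, LinearEquiv.symm_comp, id_comp]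

/-- The map `c ⊗ x ↦ φ(c₍₁₎ ⊗ x_α) ⊗ c₍₂₎^α`, that is, `φ` lifted to the cofree comodule on its
target. It is `rhat` for `χ = ψ` and `shat` for `χ = ψ^C`. -/
def hat (χ : C ⊗[R] X →ₗ[R] X ⊗[R] C) (φ : C ⊗[R] X →ₗ[R] W) : C ⊗[R] X →ₗ[R] W ⊗[R] C :=
  φ.rTensor C ∘ₗ tensorCoaction comul χ

theorem comul_rTensor_coassoc :
    comul.rTensor (C ⊗[R] X) ∘ₗ (TensorProduct.assoc R C C X).toLinearMap ∘ₗ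
        (comul (R := R) (A := C)).rTensor X =
      (TensorProduct.assoc R C C (C ⊗[R] X)).symm.toLinearMap ∘ₗ
        ((TensorProduct.assoc R C C X).toLinearMap ∘ₗ comul.rTensor X).lTensor C ∘ₗ
          (TensorProduct.assoc R C C X).toLinearMap ∘ₗ comul.rTensor X := by
  have pentagon : (TensorProduct.assoc R (C ⊗[R] C) C X).toLinearMap ∘ₗ
      (TensorProduct.assoc R C C C).symm.toLinearMap.rTensor X =
        (TensorProduct.assoc R C C (C ⊗[R] X)).symm.toLinearMap ∘ₗ
          (TensorProduct.assoc R C C X).toLinearMap.lTensor C ∘ₗ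
            (TensorProduct.assoc R C (C ⊗[R] C) X).toLinearMap := by
    ext
    rfl
  calc comul.rTensor (C ⊗[R] X) ∘ₗ (TensorProduct.assoc R C C X).toLinearMap ∘ₗ comul.rTensor X
      = (TensorProduct.assoc R (C ⊗[R] C) C X).toLinearMap ∘ₗ
          (comul.rTensor C ∘ₗ comul).rTensor X := by
        simp only [coassoc_simps]
    _ = ((TensorProduct.assoc R (C ⊗[R] C) C X).toLinearMap ∘ₗ
          (TensorProduct.assoc R C C C).symm.toLinearMap.rTensor X) ∘ₗ
            (comul.lTensor C ∘ₗ comul).rTensor X := by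
        rw [comp_assoc, ← rTensor_comp, coassoc_symm]
    _ = _ := by
        rw [pentagon]
        simp only [coassoc_simps]

theorem hat_comp_rTensor_comul (χ : C ⊗[R] X →ₗ[R] X ⊗[R] C)
    (K : (C ⊗[R] C) ⊗[R] X →ₗ[R] W) :
    hat χ (K ∘ₗ comul.rTensor X) = K.rTensor C ∘ₗ
      (TensorProduct.assoc R (C ⊗[R] C) X C).symm.toLinearMap ∘ₗ
        (TensorProduct.assoc R C C (X ⊗[R] C)).symm.toLinearMap ∘ₗ
          (χ.lTensor C ∘ₗ (TensorProduct.assoc R C C X).toLinearMap ∘ₗ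
            comul.rTensor X).lTensor C ∘ₗ
              (TensorProduct.assoc R C C X).toLinearMap ∘ₗ comul.rTensor X := by
  have h := congrArg (fun f ↦ K.rTensor C ∘ₗ
      (TensorProduct.assoc R (C ⊗[R] C) X C).symm.toLinearMap ∘ₗ χ.lTensor (C ⊗[R] C) ∘ₗ f)
      (comul_rTensor_coassoc (R := R) (C := C) (X := X))
  simp only [coassoc_simps] at h
  simp only [hat, tensorCoaction, lTensorCoaction, coassoc_simps]
  exact h

theorem assoc_comp_rTensor_hat (χ : C ⊗[R] X →ₗ[R] X ⊗[R] C) (φ : C ⊗[R] X →ₗ[R] W) :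
    (TensorProduct.assoc R W C V).toLinearMap ∘ₗ (hat χ φ).rTensor V ∘ₗ
        (TensorProduct.assoc R C X V).symm.toLinearMap =
      φ.rTensor (C ⊗[R] V) ∘ₗ (TensorProduct.assoc R C X (C ⊗[R] V)).symm.toLinearMap ∘ₗ
        ((TensorProduct.assoc R X C V).toLinearMap ∘ₗ χ.rTensor V ∘ₗ
          (TensorProduct.assoc R C X V).symm.toLinearMap).lTensor C ∘ₗ
            (TensorProduct.assoc R C C (X ⊗[R] V)).toLinearMap ∘ₗ comul.rTensor (X ⊗[R] V) := by
  have h : (TensorProduct.assoc R W C V).toLinearMap ∘ₗ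
      (φ.rTensor C ∘ₗ (TensorProduct.assoc R C X C).symm.toLinearMap ∘ₗ χ.lTensor C ∘ₗ
        (TensorProduct.assoc R C C X).toLinearMap).rTensor V ∘ₗ
          (TensorProduct.assoc R (C ⊗[R] C) X V).symm.toLinearMap =
      φ.rTensor (C ⊗[R] V) ∘ₗ (TensorProduct.assoc R C X (C ⊗[R] V)).symm.toLinearMap ∘ₗ
        ((TensorProduct.assoc R X C V).toLinearMap ∘ₗ χ.rTensor V ∘ₗ
          (TensorProduct.assoc R C X V).symm.toLinearMap).lTensor C ∘ₗ
            (TensorProduct.assoc R C C (X ⊗[R] V)).toLinearMap := by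
    ext a b x v
    simp only [AlgebraTensorModule.curry_apply, restrictScalars_self, curry_apply, coe_comp,
      LinearEquiv.coe_coe, Function.comp_apply, assoc_symm_tmul, rTensor_tmul, assoc_tmul,
      lTensor_tmul]
    induction χ (b ⊗ₜ x) with
    | zero => simp
    | add s t hs ht => simp only [tmul_add, add_tmul, map_add, hs, ht]
    | tmul y c => simp
  have h' := congrArg (fun f ↦ f ∘ₗ comul.rTensor (X ⊗[R] V)) h
  simp only [coassoc_simps] at h' ⊢
  simpa [hat, tensorCoaction, lTensorCoaction, coassoc_simps] using h'

section Hat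

variable {χ : C ⊗[R] X →ₗ[R] X ⊗[R] C}
  (hχ_comul : IsColinear (tensorCoaction comul χ) (lTensorCoaction X comul) χ)
  (hχ_counit : cofreeCounit R C X ∘ₗ χ =
    (TensorProduct.lid R X).toLinearMap ∘ₗ (counit (R := R) (A := C)).rTensor X)

include hχ_comul in
theorem isColinear_hat (φ : C ⊗[R] X →ₗ[R] W) :
    IsColinear (tensorCoaction comul χ) (lTensorCoaction W comul) (hat χ φ) :=
  (isColinear_rTensor comul φ).comp (isColinear_comul.tensorCoaction hχ_comul)

include hχ_counit in
theorem cofreeCounit_comp_hat (φ : C ⊗[R] X →ₗ[R] W) :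
    cofreeCounit R C W ∘ₗ hat χ φ = φ := by
  have h : cofreeCounit R C C ∘ₗ comul (R := R) = .id := by
    ext c
    simp [cofreeCounit]
  rw [hat, ← comp_assoc, cofreeCounit_comp_rTensor, comp_assoc,
    cofreeCounit_comp_tensorCoaction h hχ_counit, comp_id]

end Hat

end Cofree

section LeftExtend

variable {R P C X Y Q Q' : Type*} [CommSemiring R] [Semiring P] [Algebra R P]
  [AddCommMonoid C] [Module R C] [AddCommMonoid X] [Module R X] [AddCommMonoid Y] [Module R Y]
  [AddCommMonoid Q] [Module R Q] [Module P Q] [IsScalarTower R P Q]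
  [AddCommMonoid Q'] [Module R Q'] [Module P Q'] [IsScalarTower R P Q']

variable (P) in
/-- The left `P`-linear extension `p ⊗ y ↦ p • f y` of an `R`-linear map `f`. Unlike
`LinearMap.liftBaseChange` it does not ask `P` to be commutative. -/
def leftExtend : (Y →ₗ[R] Q) ≃ₗ[R] (P ⊗[R] Y →ₗ[P] Q) :=
  (ringLmapEquivSelf P R _).symm ≪≫ₗ AlgebraTensorModule.lift.equiv R P R P Y Q

@[simp]
theorem leftExtend_tmul (f : Y →ₗ[R] Q) (p : P) (y : Y) :
    leftExtend P f (p ⊗ₜ y) = p • f y :=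
  rfl

theorem leftExtend_ext {f g : P ⊗[R] Y →ₗ[P] Q} (h : ∀ y, f (1 ⊗ₜ y) = g (1 ⊗ₜ y)) : f = g :=
  AlgebraTensorModule.ext fun p y ↦ by
    rw [← mul_one p, ← smul_eq_mul, ← smul_tmul', map_smul, map_smul, h]

theorem comp_leftExtend (f : Y →ₗ[R] Q) (g : Q →ₗ[P] Q') :
    g ∘ₗ leftExtend P f = leftExtend P (g.restrictScalars R ∘ₗ f) :=
  leftExtend_ext fun y ↦ by simp

/-- For `F : C ⊗ X → P ⊗ C` and `x : X`, the `P`-linear operator on `P ⊗ C` that applies `F` to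
the `C`-factor and `x`. -/
def rightOp (F : C ⊗[R] X →ₗ[R] P ⊗[R] C) : X →ₗ[R] Module.End P (P ⊗[R] C) :=
  (leftExtend P).toLinearMap ∘ₗ (TensorProduct.curry F).flip

@[simp]
theorem rightOp_tmul (F : C ⊗[R] X →ₗ[R] P ⊗[R] C) (x : X) (p : P) (c : C) :
    rightOp F x (p ⊗ₜ c) = p • F (c ⊗ₜ x) := by
  simp [rightOp]

theorem leftExtend_assoc (F : C ⊗[R] X →ₗ[R] P ⊗[R] C) (v : P ⊗[R] C) (x : X) :
    leftExtend P F (TensorProduct.assoc R P C X (v ⊗ₜ x)) = rightOp F x v := by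
  induction v with
  | zero => simp
  | add v w hv hw => simp only [add_tmul, map_add, hv, hw]
  | tmul p c => simp

end LeftExtend

section ColinearLeftExtend

open Coalgebra

variable {R P C Y : Type*} [CommSemiring R] [Semiring P] [Algebra R P]
  [AddCommMonoid C] [Module R C] [AddCommMonoid Y] [Module R Y] [Coalgebra R C]

theorem isColinear_leftExtend {δ : Y →ₗ[R] Y ⊗[R] C} {F : Y →ₗ[R] P ⊗[R] C}
    (hF : IsColinear δ (lTensorCoaction P comul) F) :
    IsColinear (lTensorCoaction P δ) (lTensorCoaction P comul)
      ((leftExtend P F).restrictScalars R) := by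
  refine TensorProduct.ext' fun p y ↦ ?_
  have smul_eq (v : P ⊗[R] C) : p • v = (mulLeft R p).rTensor C v := by
    induction v with
    | zero => simp
    | add v w hv hw => rw [smul_add, map_add, hv, hw]
    | tmul q c => simp [smul_tmul']
  have hp : IsColinear δ (lTensorCoaction P comul) ((mulLeft R p).rTensor C ∘ₗ F) :=
    (isColinear_rTensor comul _).comp hF
  have h : ((leftExtend P F).restrictScalars R).rTensor C ∘ₗ
      (TensorProduct.assoc R P Y C).symm.toLinearMap ∘ₗ TensorProduct.mk R P (Y ⊗[R] C) p =
        ((mulLeft R p).rTensor C ∘ₗ F).rTensor C := by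
    ext y c
    simp [smul_eq]
  calc lTensorCoaction P comul (leftExtend P F (p ⊗ₜ y))
      = lTensorCoaction P comul ((mulLeft R p).rTensor C (F y)) := by
        rw [leftExtend_tmul, smul_eq]
    _ = ((mulLeft R p).rTensor C ∘ₗ F).rTensor C (δ y) := DFunLike.congr_fun hp y
    _ = _ := (DFunLike.congr_fun h (δ y)).symm

end ColinearLeftExtend

section Bridge

variable {k : Type} [Field k] {P : Type} [Ring P] [Algebra k P]
  {C X : Type} [AddCommGroup C] [Module k C] [AddCommGroup X] [Module k X]

theorem mulPC_tmul (p : P) (v : P ⊗[k] C) : mulPC k P C (p ⊗ₜ v) = p • v := by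
  induction v with
  | zero => simp
  | add v w hv hw => simp only [tmul_add, map_add, hv, hw, smul_add]
  | tmul q c => simp [mulPC, smul_tmul']

theorem mulPC_map_id (F : X →ₗ[k] P ⊗[k] C) (t : P ⊗[k] X) :
    mulPC k P C (map .id F t) = leftExtend P F t := by
  induction t with
  | zero => simp
  | add s t hs ht => simp only [map_add, hs, ht]
  | tmul p x => simp [mulPC_tmul]

end Bridge

section CrossedProduct

variable {k P C : Type*} [CommSemiring k] [Semiring P] [Algebra k P] [AddCommMonoid C] [Module k C]

/-- The subspace `M ⊗ C` of `P ⊗ C`. -/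
def coeffSubmodule (M : Subalgebra k P) (C : Type*) [AddCommMonoid C] [Module k C] :
    Submodule k (P ⊗[k] C) :=
  LinearMap.range (M.toSubmodule.subtype.rTensor C)

theorem map_tmul_eq_smul (f : P ⊗[k] C →ₗ[P] P ⊗[k] C) (x : P) (c : C) :
    f (x ⊗ₜ c) = x • f (1 ⊗ₜ c) := by
  rw [← map_smul, smul_tmul', smul_eq_mul, mul_one]

variable {M : Subalgebra k P}

theorem tmul_mem_coeffSubmodule {x : P} (hx : x ∈ M) (c : C) : x ⊗ₜ c ∈ coeffSubmodule M C :=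
  ⟨⟨x, hx⟩ ⊗ₜ c, rfl⟩

theorem rTensor_mem_coeffSubmodule {X : Type*} [AddCommMonoid X] [Module k X] {φ : X →ₗ[k] P}
    (hφ : ∀ x, φ x ∈ M) (t : X ⊗[k] C) : φ.rTensor C t ∈ coeffSubmodule M C :=
  ⟨(φ.codRestrict M.toSubmodule hφ).rTensor C t, by
    rw [← comp_apply, ← rTensor_comp, subtype_comp_codRestrict]⟩

theorem coeffSubmodule_le {N : Submodule k (P ⊗[k] C)} :
    coeffSubmodule M C ≤ N ↔ ∀ x ∈ M, ∀ c, x ⊗ₜ c ∈ N := by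
  refine ⟨fun h x hx c ↦ h (tmul_mem_coeffSubmodule hx c), fun h ↦ ?_⟩
  rintro _ ⟨t, rfl⟩
  induction t with
  | zero => simp
  | add s t hs ht => rw [map_add]; exact N.add_mem hs ht
  | tmul x c => exact h x x.2 c

theorem eqOn_coeffSubmodule {W : Type*} [AddCommMonoid W] [Module k W] {f g : P ⊗[k] C →ₗ[k] W}
    (h : ∀ x ∈ M, ∀ c, f (x ⊗ₜ c) = g (x ⊗ₜ c)) : Set.EqOn f g (coeffSubmodule M C) :=
  coeffSubmodule_le (N := eqLocus f g).2 h

theorem smul_mem_coeffSubmodule {x : P} (hx : x ∈ M) {v : P ⊗[k] C}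
    (hv : v ∈ coeffSubmodule M C) : x • v ∈ coeffSubmodule M C :=
  coeffSubmodule_le (N := (coeffSubmodule M C).comap (DistribSMul.toLinearMap k _ x)).2
    (fun _ hy c ↦ tmul_mem_coeffSubmodule (M.mul_mem hx hy) c) hv

theorem map_mem_coeffSubmodule {f : P ⊗[k] C →ₗ[P] P ⊗[k] C}
    (h : ∀ c, f (1 ⊗ₜ c) ∈ coeffSubmodule M C) {v : P ⊗[k] C} (hv : v ∈ coeffSubmodule M C) :
    f v ∈ coeffSubmodule M C := by
  refine coeffSubmodule_le (N := (coeffSubmodule M C).comap (f.restrictScalars k)).2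
    (fun x hx c ↦ ?_) hv
  simpa [map_tmul_eq_smul f x c] using smul_mem_coeffSubmodule hx (h c)

/-- The crossed product on `P ⊗ C` as a family of right multiplications: `crossedMul R S v u` is
the product `u * v`, where `R y` and `S c` are the right multiplications by `y ⊗ e` and `1 ⊗ c`. -/
def crossedMul (R : P →ₗ[k] Module.End P (P ⊗[k] C)) (S : C →ₗ[k] Module.End P (P ⊗[k] C)) :
    P ⊗[k] C →ₗ[k] Module.End P (P ⊗[k] C) :=
  TensorProduct.lift ((LinearMap.mul k _).flip.compl₁₂ R S)

@[simp]
theorem crossedMul_tmul (R : P →ₗ[k] Module.End P (P ⊗[k] C))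
    (S : C →ₗ[k] Module.End P (P ⊗[k] C)) (y : P) (c : C) :
    crossedMul R S (y ⊗ₜ c) = S c * R y := by
  simp [crossedMul]

theorem leftExtend_assoc_rTensor (F : C ⊗[k] C →ₗ[k] P ⊗[k] C) (G : C ⊗[k] P →ₗ[k] P ⊗[k] C)
    (b : C) (v : P ⊗[k] C) :
    leftExtend P F (TensorProduct.assoc k P C C
        (G.rTensor C ((TensorProduct.assoc k C P C).symm (b ⊗ₜ v)))) =
      crossedMul (rightOp G) (rightOp F) v (1 ⊗ₜ b) := by
  induction v with
  | zero => simp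
  | add v w hv hw => simp only [tmul_add, map_add, hv, hw, LinearMap.add_apply]
  | tmul y c => simp [leftExtend_assoc]

/-- Crossed product data in terms of the right multiplications `R y` by `y ⊗ e` and `S c` by
`1 ⊗ c`: the fields are conditions (i)–(iv), the twisted module condition and the cocycle
condition on the corresponding maps `ρ` and `σ`. -/
structure IsCrossedPair (M : Subalgebra k P) (e : C) (R : P →ₗ[k] Module.End P (P ⊗[k] C))
    (S : C →ₗ[k] Module.End P (P ⊗[k] C)) : Prop where
  action_mem : ∀ x ∈ M, ∀ v ∈ coeffSubmodule M C, R x v ∈ coeffSubmodule M C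
  cocycle_mem : ∀ c, ∀ v ∈ coeffSubmodule M C, S c v ∈ coeffSubmodule M C
  action_one : R 1 = 1
  cocycle_unit : S e = 1
  action_apply_unit : ∀ x ∈ M, R x (1 ⊗ₜ e) = x ⊗ₜ e
  cocycle_apply_unit : ∀ c, S c (1 ⊗ₜ e) = 1 ⊗ₜ c
  action_mul : ∀ x ∈ M, ∀ y ∈ M, R (x * y) = R y * R x
  twisted_module : ∀ x ∈ M, ∀ b, crossedMul R S (R x (1 ⊗ₜ b)) = R x * S b
  cocycle_condition : ∀ b c, crossedMul R S (S c (1 ⊗ₜ b)) = S c * S b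

/-- The product `u * v = m v u` on `P ⊗ C`, left `P`-linear by construction, restricts to an
associative product on `M ⊗ C`, for which `1 ⊗ e` is a unit. Associativity and the right unit law
are asked for all left factors in `P ⊗ C`. -/
structure IsCrossedMul (M : Subalgebra k P) (e : C)
    (m : P ⊗[k] C →ₗ[k] Module.End P (P ⊗[k] C)) : Prop where
  map_mem : ∀ v ∈ coeffSubmodule M C, ∀ u ∈ coeffSubmodule M C, m v u ∈ coeffSubmodule M C
  map_map : ∀ w ∈ coeffSubmodule M C, ∀ v ∈ coeffSubmodule M C, m (m w v) = m w * m v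
  map_unit : m (1 ⊗ₜ e) = 1
  apply_unit : ∀ v ∈ coeffSubmodule M C, m v (1 ⊗ₜ e) = v

variable {e : C} {R : P →ₗ[k] Module.End P (P ⊗[k] C)} {S : C →ₗ[k] Module.End P (P ⊗[k] C)}
  {m : P ⊗[k] C →ₗ[k] Module.End P (P ⊗[k] C)}

namespace IsCrossedPair

variable (h : IsCrossedPair M e R S)
include h

theorem crossedMul_smul {y : P} (hy : y ∈ M) {w : P ⊗[k] C} (hw : w ∈ coeffSubmodule M C) :
    crossedMul R S (y • w) = crossedMul R S w * R y :=
  eqOn_coeffSubmodule (f := crossedMul R S ∘ₗ DistribSMul.toLinearMap k _ y)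
    (g := (LinearMap.mul k _).flip (R y) ∘ₗ crossedMul R S)
    (fun z hz d ↦ by simp [smul_tmul', h.action_mul y hy z hz, mul_assoc]) hw

theorem crossedMul_apply_of_tmul {f : Module.End P (P ⊗[k] C)}
    (hmem : ∀ b, f (1 ⊗ₜ b) ∈ coeffSubmodule M C)
    (hf : ∀ b, crossedMul R S (f (1 ⊗ₜ b)) = f * S b) {v : P ⊗[k] C}
    (hv : v ∈ coeffSubmodule M C) : crossedMul R S (f v) = f * crossedMul R S v :=
  eqOn_coeffSubmodule (f := crossedMul R S ∘ₗ f.restrictScalars k)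
    (g := LinearMap.mul k _ f ∘ₗ crossedMul R S)
    (fun y hy b ↦ by
      simp [map_tmul_eq_smul f y b, h.crossedMul_smul hy (hmem b), hf, mul_assoc]) hv

theorem isCrossedMul : IsCrossedMul M e (crossedMul R S) where
  map_mem v hv u hu :=
    coeffSubmodule_le (N := (coeffSubmodule M C).comap
      (applyₗ' k u ∘ₗ crossedMul R S)).2 (fun y hy c ↦ by
        simpa using h.cocycle_mem c _ (h.action_mem y hy u hu)) hv
  map_map w hw v hv := by
    have hR {x : P} (hx : x ∈ M) : crossedMul R S (R x v) = R x * crossedMul R S v :=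
      h.crossedMul_apply_of_tmul (fun b ↦ h.action_mem x hx _ (tmul_mem_coeffSubmodule M.one_mem b))
        (h.twisted_module x hx) hv
    have hS (c : C) {u : P ⊗[k] C} (hu : u ∈ coeffSubmodule M C) :
        crossedMul R S (S c u) = S c * crossedMul R S u :=
      h.crossedMul_apply_of_tmul (fun b ↦ h.cocycle_mem c _ (tmul_mem_coeffSubmodule M.one_mem b))
        (fun b ↦ h.cocycle_condition b c) hu
    refine eqOn_coeffSubmodule (f := crossedMul R S ∘ₗ applyₗ' k v ∘ₗ crossedMul R S)
      (g := (LinearMap.mul k _).flip (crossedMul R S v) ∘ₗ crossedMul R S) (fun x hx c ↦ ?_) hw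
    simp [hS c (h.action_mem x hx v hv), hR hx, mul_assoc]
  map_unit := by simp [h.action_one, h.cocycle_unit]
  apply_unit v hv := eqOn_coeffSubmodule
    (f := applyₗ' k ((1 : P) ⊗ₜ[k] e) ∘ₗ crossedMul R S) (g := .id) (fun x hx c ↦ by
      simp [h.action_apply_unit x hx, map_tmul_eq_smul (S c) x e, h.cocycle_apply_unit,
        smul_tmul']) hv

end IsCrossedPair

namespace IsCrossedMul

variable (h : IsCrossedMul M e m)
include h

theorem map_smul_tmul_unit {x : P} (hx : x ∈ M) {v : P ⊗[k] C} (hv : v ∈ coeffSubmodule M C) :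
    m (x • v) = m v * m (x ⊗ₜ e) := by
  have hxe : m v (x ⊗ₜ e) = x • v := by rw [map_tmul_eq_smul, h.apply_unit v hv]
  rw [← hxe, h.map_map v hv _ (tmul_mem_coeffSubmodule hx e)]

theorem crossedMul_eqOn (hR : ∀ x, R x = m (x ⊗ₜ e)) (hS : ∀ c, S c = m (1 ⊗ₜ c)) :
    Set.EqOn (crossedMul R S) m (coeffSubmodule M C) :=
  eqOn_coeffSubmodule fun x hx c ↦ by
    rw [crossedMul_tmul, hR, hS,
      ← h.map_smul_tmul_unit hx (tmul_mem_coeffSubmodule M.one_mem c), smul_tmul', smul_eq_mul,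
      mul_one]

theorem isCrossedPair (hR : ∀ x, R x = m (x ⊗ₜ e)) (hS : ∀ c, S c = m (1 ⊗ₜ c)) :
    IsCrossedPair M e R S := by
  have hone (c : C) : 1 ⊗ₜ c ∈ coeffSubmodule M C := tmul_mem_coeffSubmodule M.one_mem c
  have hmul := h.crossedMul_eqOn hR hS
  exact {
    action_mem := fun x hx v hv ↦ hR x ▸ h.map_mem _ (tmul_mem_coeffSubmodule hx e) v hv
    cocycle_mem := fun c v hv ↦ hS c ▸ h.map_mem _ (hone c) v hv
    action_one := by rw [hR, h.map_unit]
    cocycle_unit := by rw [hS, h.map_unit]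
    action_apply_unit := fun x hx ↦ by rw [hR, h.apply_unit _ (tmul_mem_coeffSubmodule hx e)]
    cocycle_apply_unit := fun c ↦ by rw [hS, h.apply_unit _ (hone c)]
    action_mul := fun x hx y hy ↦ by
      simp only [hR]
      rw [← h.map_smul_tmul_unit hx (tmul_mem_coeffSubmodule hy e), smul_tmul', smul_eq_mul]
    twisted_module := fun x hx b ↦ by
      have hxe := tmul_mem_coeffSubmodule (C := C) hx e
      rw [hR, hS, hmul (h.map_mem _ hxe _ (hone b)), h.map_map _ hxe _ (hone b)]
    cocycle_condition := fun b c ↦ by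
      rw [hS, hS, hmul (h.map_mem _ (hone c) _ (hone b)), h.map_map _ (hone c) _ (hone b)] }

end IsCrossedMul

/-- The product on `P ⊗ C` pulled back along a left `P`-linear automorphism `Θ`. -/
def pullbackMul (Θ : (P ⊗[k] C) ≃ₗ[P] P ⊗[k] C) (m : P ⊗[k] C →ₗ[k] Module.End P (P ⊗[k] C)) :
    P ⊗[k] C →ₗ[k] Module.End P (P ⊗[k] C) :=
  (Θ.symm.conjAlgEquiv k).toLinearMap ∘ₗ m ∘ₗ (Θ.restrictScalars k).toLinearMap

@[simp]
theorem pullbackMul_apply (Θ : (P ⊗[k] C) ≃ₗ[P] P ⊗[k] C)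
    (m : P ⊗[k] C →ₗ[k] Module.End P (P ⊗[k] C)) (v u : P ⊗[k] C) :
    pullbackMul Θ m v u = Θ.symm (m (Θ v) (Θ u)) :=
  rfl

theorem IsCrossedMul.pullback (h : IsCrossedMul M e m) (Θ : (P ⊗[k] C) ≃ₗ[P] P ⊗[k] C)
    (hΘ : ∀ v ∈ coeffSubmodule M C, Θ v ∈ coeffSubmodule M C)
    (hΘ_symm : ∀ v ∈ coeffSubmodule M C, Θ.symm v ∈ coeffSubmodule M C)
    (hΘe : Θ (1 ⊗ₜ e) = 1 ⊗ₜ e) : IsCrossedMul M e (pullbackMul Θ m) where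
  map_mem v hv u hu := hΘ_symm _ (h.map_mem _ (hΘ v hv) _ (hΘ u hu))
  map_map w hw v hv := by
    ext u
    simp [h.map_map _ (hΘ w hw) _ (hΘ v hv)]
  map_unit := by
    ext u
    simp [hΘe, h.map_unit]
  apply_unit v hv := by simp [hΘe, h.apply_unit _ (hΘ v hv)]

end CrossedProduct

section Data

variable {k : Type} [Field k] {P : Type} [Ring P] [Algebra k P]
  {C : Type} [AddCommGroup C] [Module k C] [Coalgebra k C]
  {ψ : C ⊗[k] P →ₗ[k] P ⊗[k] C} {e : C} {ψC : C ⊗[k] C →ₗ[k] C ⊗[k] C}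
  {ρ : C ⊗[k] P →ₗ[k] P} {σ : C ⊗[k] C →ₗ[k] P}

/-- The crossed product on `P ⊗ C` determined by `ρ` and `σ`, as a family of right
multiplications: `crossedProduct ψ ψC ρ σ v u` is `u * v`. -/
abbrev crossedProduct (ψ : C ⊗[k] P →ₗ[k] P ⊗[k] C) (ψC : C ⊗[k] C →ₗ[k] C ⊗[k] C)
    (ρ : C ⊗[k] P →ₗ[k] P) (σ : C ⊗[k] C →ₗ[k] P) :
    P ⊗[k] C →ₗ[k] Module.End P (P ⊗[k] C) :=
  crossedMul (rightOp (rhat k P C ψ ρ)) (rightOp (shat k P C ψC σ))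

theorem prodX_tmul (u v : P ⊗[k] C) :
    prodX k P C ψ ψC ρ σ (u ⊗ₜ v) =
      crossedProduct ψ ψC ρ σ v u := by
  induction u with
  | zero => simp
  | add u w hu hw => simp only [add_tmul, map_add, hu, hw]
  | tmul p b =>
    rw [map_tmul_eq_smul, ← leftExtend_assoc_rTensor]
    simp [prodX, mulPC_map_id, mulPC_tmul, rTensor_def]

theorem cocLHS_tmul (a b c : C) :
    CocLHS k P C ψ ψC ρ σ (a ⊗ₜ (b ⊗ₜ c)) =
      crossedProduct ψ ψC ρ σ
        (rightOp (shat k P C ψC σ) c (1 ⊗ₜ b)) (1 ⊗ₜ a) := by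
  rw [← leftExtend_assoc_rTensor]
  simp [CocLHS, mulPC_map_id, rTensor_def]

theorem cocRHS_tmul (a b c : C) :
    CocRHS k P C ψC σ (a ⊗ₜ (b ⊗ₜ c)) =
      rightOp (shat k P C ψC σ) c (rightOp (shat k P C ψC σ) b (1 ⊗ₜ a)) := by
  simp [CocRHS, mulPC_map_id, leftExtend_assoc]

theorem twLHS_tmul (a b : C) (x : P) :
    TwLHS k P C ψ ψC ρ σ (a ⊗ₜ (b ⊗ₜ x)) =
      crossedProduct ψ ψC ρ σ
        (rightOp (rhat k P C ψ ρ) x (1 ⊗ₜ b)) (1 ⊗ₜ a) := by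
  rw [← leftExtend_assoc_rTensor]
  simp [TwLHS, mulPC_map_id, rTensor_def]

theorem twRHS_tmul (a b : C) (x : P) :
    TwRHS k P C ψ ψC ρ σ (a ⊗ₜ (b ⊗ₜ x)) =
      rightOp (rhat k P C ψ ρ) x (rightOp (shat k P C ψC σ) b (1 ⊗ₜ a)) := by
  simp [TwRHS, mulPC_map_id, leftExtend_assoc]

/-- The fixed points `M` of an entwining as a subalgebra of `P`. -/
def fixedSubalgebra (hψ : IsEntwining k P C ψ) (e : C) : Subalgebra k P :=
  (Msub k P C ψ e).toSubalgebra (hψ.2.1 e) fun x y (hx : ψ _ = _) (hy : ψ _ = _) ↦ by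
    have h := DFunLike.congr_fun hψ.1 (e ⊗ₜ[k] (x ⊗ₜ[k] y))
    simpa [hx, hy, Msub] using h

theorem rhat_unit_tmul (he : IsGrouplike k C e) {x : P} (hx : x ∈ Msub k P C ψ e) :
    rhat k P C ψ ρ (e ⊗ₜ x) = ρ (e ⊗ₜ x) ⊗ₜ e := by
  have hx : ψ (e ⊗ₜ x) = x ⊗ₜ e := hx
  simp [rhat, he.1, hx]

theorem rhat_tmul_one (hψ : IsEntwining k P C ψ) (hρ : ∀ c, ρ (c ⊗ₜ 1) = ε k C c • 1) (c : C) :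
    rhat k P C ψ ρ (c ⊗ₜ 1) = 1 ⊗ₜ c := by
  have h (t : C ⊗[k] C) : map ρ .id ((TensorProduct.assoc k C P C).symm
      (map .id ψ (TensorProduct.assoc k C C P (t ⊗ₜ 1)))) =
        1 ⊗ₜ TensorProduct.lid k C ((ε k C).rTensor C t) := by
    induction t with
    | zero => simp
    | add s t hs ht => simp only [add_tmul, tmul_add, map_add, hs, ht]
    | tmul b c => simp [hψ.2.1 c, hρ, smul_tmul]
  simpa [rhat] using h (Δ k C c)

theorem shat_unit_tmul (hdata : IsEntwiningData k P C ψ e ψC)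
    (hσ : ∀ c, σ (e ⊗ₜ c) = ε k C c • 1) (c : C) :
    shat k P C ψC σ (e ⊗ₜ c) = 1 ⊗ₜ c := by
  have h (t : C ⊗[k] C) : map σ .id ((TensorProduct.assoc k C C C).symm (e ⊗ₜ t)) =
      1 ⊗ₜ TensorProduct.lid k C ((ε k C).rTensor C t) := by
    induction t with
    | zero => simp
    | add s t hs ht => simp only [tmul_add, map_add, hs, ht]
    | tmul b c => simp [hσ, smul_tmul]
  simpa [shat, hdata.2.1.1, hdata.2.2.2.2 c] using h (Δ k C c)

theorem cofreeCounit_rhat (hψ : IsEntwining k P C ψ) (t : C ⊗[k] P) :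
    cofreeCounit k C P (rhat k P C ψ ρ t) = ρ t :=
  DFunLike.congr_fun (cofreeCounit_comp_hat hψ.2.2.2 ρ) t

theorem cofreeCounit_shat (hdata : IsEntwiningData k P C ψ e ψC) (t : C ⊗[k] C) :
    cofreeCounit k C P (shat k P C ψC σ t) = σ t :=
  DFunLike.congr_fun (cofreeCounit_comp_hat hdata.2.2.2.1 σ) t

theorem condI_iff (hψ : IsEntwining k P C ψ) (he : IsGrouplike k C e) :
    CondI k P C ψ e ρ ↔ (∀ x ∈ fixedSubalgebra hψ e,
      rightOp (rhat k P C ψ ρ) x (1 ⊗ₜ e) = x ⊗ₜ e) ∧ rightOp (rhat k P C ψ ρ) 1 = 1 := by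
  refine and_congr (forall₂_congr fun x hx ↦ ?_) ⟨fun h ↦ ?_, fun h c ↦ ?_⟩
  · rw [rightOp_tmul, one_smul, rhat_unit_tmul he hx]
    refine ⟨fun h ↦ by rw [h], fun h ↦ ?_⟩
    simpa [he.2] using congrArg (cofreeCounit k C P) h
  · exact leftExtend_ext fun c ↦ by simp [rhat_tmul_one hψ h]
  · have h' : rhat k P C ψ ρ (c ⊗ₜ 1) = 1 ⊗ₜ c := by simpa using DFunLike.congr_fun h (1 ⊗ₜ c)
    rw [← cofreeCounit_rhat hψ, h', cofreeCounit_tmul]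

theorem condII_iff (hψ : IsEntwining k P C ψ) : CondII k P C ψ e ρ ↔
    ∀ x ∈ fixedSubalgebra hψ e, ∀ v ∈ coeffSubmodule (fixedSubalgebra hψ e) C,
      rightOp (rhat k P C ψ ρ) x v ∈ coeffSubmodule (fixedSubalgebra hψ e) C := by
  constructor
  · intro h x hx v
    refine map_mem_coeffSubmodule fun c ↦ ?_
    rw [rightOp_tmul, one_smul]
    exact h c x hx
  · intro h c x hx
    have hxc := h x hx _ (tmul_mem_coeffSubmodule (one_mem _) c)
    rwa [rightOp_tmul, one_smul] at hxc

theorem bmapIII_tmul (c : C) (x y : P) :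
    BmapIII k P C ψ ρ (c ⊗ₜ (x ⊗ₜ y)) =
      rightOp (rhat k P C ψ ρ) y (rightOp (rhat k P C ψ ρ) x (1 ⊗ₜ c)) := by
  simp [BmapIII, mulPC_map_id, leftExtend_assoc]

theorem condIII_iff (hψ : IsEntwining k P C ψ) : CondIII k P C ψ e ρ ↔
    ∀ x ∈ fixedSubalgebra hψ e, ∀ y ∈ fixedSubalgebra hψ e, rightOp (rhat k P C ψ ρ) (x * y) =
      rightOp (rhat k P C ψ ρ) y * rightOp (rhat k P C ψ ρ) x := by
  constructor
  · intro h x hx y hy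
    exact leftExtend_ext fun c ↦ by simpa [bmapIII_tmul] using h c x y hx hy
  · intro h c x y hx hy
    simpa [bmapIII_tmul] using DFunLike.congr_fun (h x hx y hy) (1 ⊗ₜ c)

theorem sigmaIntoM_iff (hdata : IsEntwiningData k P C ψ e ψC) : SigmaIntoM k P C ψ e σ ↔
    ∀ c, ∀ v ∈ coeffSubmodule (fixedSubalgebra hdata.1 e) C,
      rightOp (shat k P C ψC σ) c v ∈ coeffSubmodule (fixedSubalgebra hdata.1 e) C := by
  constructor
  · intro h c v
    refine map_mem_coeffSubmodule fun b ↦ ?_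
    have hσ (t : C ⊗[k] C) : σ t ∈ fixedSubalgebra hdata.1 e := by
      induction t with
      | zero => simp
      | add s t hs ht => rw [map_add]; exact add_mem hs ht
      | tmul b c => exact h b c
    rw [rightOp_tmul, one_smul]
    exact rTensor_mem_coeffSubmodule hσ (tensorCoaction (Δ k C) ψC (b ⊗ₜ c))
  · intro h b c
    have hle : coeffSubmodule (fixedSubalgebra hdata.1 e) C ≤
        (Msub k P C ψ e).comap (cofreeCounit k C P) :=
      coeffSubmodule_le.2 fun x hx c ↦ by simpa using (Msub k P C ψ e).smul_mem (ε k C c) hx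
    rw [← cofreeCounit_shat hdata]
    simpa using hle (h c _ (tmul_mem_coeffSubmodule (one_mem _) b))

theorem condIV_iff (hdata : IsEntwiningData k P C ψ e ψC) : CondIV k P C e ψC σ ↔
    (∀ c, rightOp (shat k P C ψC σ) c (1 ⊗ₜ e) = 1 ⊗ₜ c) ∧ rightOp (shat k P C ψC σ) e = 1 := by
  refine and_congr ⟨fun h c ↦ ?_, fun h c ↦ ?_⟩ ⟨fun h ↦ ?_, fun h c ↦ ?_⟩
  · simp [shat_unit_tmul hdata h]
  · have h' : shat k P C ψC σ (e ⊗ₜ c) = 1 ⊗ₜ c := by simpa using h c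
    rw [← cofreeCounit_shat hdata, h', cofreeCounit_tmul]
  · exact leftExtend_ext fun c ↦ by simp [h]
  · simpa using DFunLike.congr_fun h (1 ⊗ₜ c)

theorem cocycle_iff : Cocycle k P C ψ ψC ρ σ ↔
    ∀ b c, crossedProduct ψ ψC ρ σ
      (rightOp (shat k P C ψC σ) c (1 ⊗ₜ b)) =
        rightOp (shat k P C ψC σ) c * rightOp (shat k P C ψC σ) b := by
  constructor
  · intro h b c
    refine leftExtend_ext fun a ↦ ?_
    rw [← cocLHS_tmul, h, cocRHS_tmul, Module.End.mul_apply]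
  · intro h
    refine TensorProduct.ext_threefold' fun a b c ↦ ?_
    rw [cocLHS_tmul, h, cocRHS_tmul, Module.End.mul_apply]

theorem twisted_iff (hψ : IsEntwining k P C ψ) : Twisted k P C ψ e ψC ρ σ ↔
    ∀ x ∈ fixedSubalgebra hψ e, ∀ b,
      crossedProduct ψ ψC ρ σ
        (rightOp (rhat k P C ψ ρ) x (1 ⊗ₜ b)) =
          rightOp (rhat k P C ψ ρ) x * rightOp (shat k P C ψC σ) b := by
  constructor
  · intro h x hx b
    refine leftExtend_ext fun a ↦ ?_
    rw [← twLHS_tmul, h a b x hx, twRHS_tmul, Module.End.mul_apply]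
  · intro h a b x hx
    rw [twLHS_tmul, h x hx, twRHS_tmul, Module.End.mul_apply]

theorem isCrossedPair_iff (hdata : IsEntwiningData k P C ψ e ψC) :
    IsCrossedPair (fixedSubalgebra hdata.1 e) e (rightOp (rhat k P C ψ ρ))
        (rightOp (shat k P C ψC σ)) ↔
      IsCrossedData k P C ψ e ψC ρ σ ∧ Cocycle k P C ψ ψC ρ σ ∧ Twisted k P C ψ e ψC ρ σ := by
  rw [IsCrossedData, condI_iff hdata.1 hdata.2.1, condII_iff hdata.1, condIII_iff hdata.1,
    sigmaIntoM_iff hdata, condIV_iff hdata, cocycle_iff, twisted_iff hdata.1]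
  constructor
  · intro h
    exact ⟨⟨⟨h.action_apply_unit, h.action_one⟩, h.action_mem, h.action_mul, h.cocycle_mem,
      h.cocycle_apply_unit, h.cocycle_unit⟩, h.cocycle_condition, h.twisted_module⟩
  · rintro ⟨⟨⟨happly, hone⟩, hmem, hmul, hSmem, hSapply, hSe⟩, hcoc, htw⟩
    exact ⟨hmem, hSmem, hone, hSe, happly, hSapply, hmul, htw, hcoc⟩

end Data

section GaugeMap

open Coalgebra WithConv

variable {R P C X Y : Type*} [CommSemiring R] [Semiring P] [Algebra R P]
  [AddCommMonoid C] [Module R C] [Coalgebra R C]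
  [AddCommMonoid X] [Module R X] [AddCommMonoid Y] [Module R Y]

theorem mul'_comp_map (φ : X →ₗ[R] P) (f : Y →ₗ[R] P) :
    mul' R P ∘ₗ map φ f = (leftExtend P f).restrictScalars R ∘ₗ φ.rTensor Y := by
  ext x y
  simp

theorem cofreeCounit_leftExtend (F : Y →ₗ[R] P ⊗[R] C) (t : P ⊗[R] Y) :
    cofreeCounit R C P (leftExtend P F t) = leftExtend P (cofreeCounit R C P ∘ₗ F) t := by
  have cofreeCounit_smul (p : P) (v : P ⊗[R] C) :
      cofreeCounit R C P (p • v) = p • cofreeCounit R C P v := by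
    induction v with
    | zero => simp
    | add v w hv hw => simp only [smul_add, map_add, hv, hw]
    | tmul q c => simp [smul_tmul']
  induction t with
  | zero => simp
  | add s t hs ht => simp only [map_add, hs, ht]
  | tmul p y => simp [cofreeCounit_smul]

/-- The left `P`-linear map `x ⊗ c ↦ x γ(c₍₁₎) ⊗ c₍₂₎` on `P ⊗ C`, denoted `Θ` in the theorem. -/
def gaugeMap (γ : C →ₗ[R] P) : P ⊗[R] C →ₗ[P] P ⊗[R] C :=
  leftExtend P (γ.rTensor C ∘ₗ comul)

theorem isColinear_rTensor_comp_comul (γ : C →ₗ[R] P) :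
    IsColinear comul (lTensorCoaction P comul) (γ.rTensor C ∘ₗ comul) :=
  (isColinear_rTensor comul γ).comp isColinear_comul

theorem isColinear_gaugeMap (γ : C →ₗ[R] P) :
    IsColinear (lTensorCoaction P comul) (lTensorCoaction P comul)
      ((gaugeMap γ).restrictScalars R) :=
  isColinear_leftExtend (isColinear_rTensor_comp_comul γ)

theorem cofreeCounit_gaugeMap (γ : C →ₗ[R] P) (v : P ⊗[R] C) :
    cofreeCounit R C P (gaugeMap γ v) = leftExtend P γ v := by
  have h : cofreeCounit R C P ∘ₗ γ.rTensor C ∘ₗ comul = γ := by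
    rw [← comp_assoc, cofreeCounit_comp_rTensor, comp_assoc]
    ext c
    simp [cofreeCounit]
  rw [gaugeMap, cofreeCounit_leftExtend, h]

theorem gaugeMap_comp (γ γ' : C →ₗ[R] P) :
    gaugeMap γ ∘ₗ gaugeMap γ' = gaugeMap (toConv γ' * toConv γ).ofConv := by
  have h : (gaugeMap γ).restrictScalars R ∘ₗ γ'.rTensor C =
      (mul' R P ∘ₗ map γ' γ).rTensor C ∘ₗ (TensorProduct.assoc R C C C).symm.toLinearMap ∘ₗ
        comul.lTensor C := by
    ext b d
    simp only [gaugeMap, AlgebraTensorModule.curry_apply, curry_apply, coe_restrictScalars,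
      coe_comp, LinearEquiv.coe_coe, Function.comp_apply, rTensor_tmul, lTensor_tmul,
      leftExtend_tmul]
    induction comul (R := R) d with
    | zero => simp
    | add s t hs ht => simp only [map_add, smul_add, tmul_add, hs, ht]
    | tmul c d => simp [smul_tmul']
  refine leftExtend_ext fun c ↦ ?_
  calc gaugeMap γ (gaugeMap γ' (1 ⊗ₜ c))
      = gaugeMap γ (γ'.rTensor C (comul c)) := by simp [gaugeMap]
    _ = (mul' R P ∘ₗ map γ' γ).rTensor C
          ((TensorProduct.assoc R C C C).symm (comul.lTensor C (comul c))) :=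
        DFunLike.congr_fun h (comul c)
    _ = (mul' R P ∘ₗ map γ' γ).rTensor C (comul.rTensor C (comul c)) := by
        rw [coassoc_symm_apply]
    _ = gaugeMap (toConv γ' * toConv γ).ofConv (1 ⊗ₜ c) := by
        rw [← rTensor_comp_apply]
        simp [gaugeMap, LinearMap.convMul_def, comp_assoc]

theorem gaugeMap_one : gaugeMap (1 : WithConv (C →ₗ[R] P)).ofConv = .id :=
  leftExtend_ext fun c ↦ by simp [gaugeMap, LinearMap.convOne_def, rTensor_comp_apply]

/-- The automorphism `gaugeMap γ` for `γ` with convolution inverse `γi`. -/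
def gaugeEquiv (γ γi : C →ₗ[R] P) (h : toConv γ * toConv γi = 1) (h' : toConv γi * toConv γ = 1) :
    (P ⊗[R] C) ≃ₗ[P] P ⊗[R] C :=
  .ofLinearMap (gaugeMap γ) (gaugeMap γi) (by rw [gaugeMap_comp, h', gaugeMap_one])
    (by rw [gaugeMap_comp, h, gaugeMap_one])

theorem gaugeMap_tmul_of_comul {γ : C →ₗ[R] P} {e : C} (he : comul (R := R) e = e ⊗ₜ e)
    (hγe : γ e = 1) (x : P) : gaugeMap γ (x ⊗ₜ e) = x ⊗ₜ e := by
  simp [gaugeMap, he, hγe, smul_tmul']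

theorem gaugeMap_mem_coeffSubmodule {M : Subalgebra R P} {γ : C →ₗ[R] P} (hγ : ∀ c, γ c ∈ M)
    {v : P ⊗[R] C} (hv : v ∈ coeffSubmodule M C) : gaugeMap γ v ∈ coeffSubmodule M C :=
  map_mem_coeffSubmodule (fun c ↦ by simpa [gaugeMap] using rTensor_mem_coeffSubmodule hγ _) hv

/-- For `F : C ⊗ X → P ⊗ C` with components `F(c ⊗ x) = F⁰ ⊗ F¹`, the map
`b ⊗ x ↦ γ(b₍₁₎) F⁰ γi(F¹)`, where `F` is evaluated at `b₍₂₎ ⊗ x`. Both `ρ^γ` and `σ^γ` are of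
this form. -/
def gaugeCoeff (γ γi : C →ₗ[R] P) (F : C ⊗[R] X →ₗ[R] P ⊗[R] C) : C ⊗[R] X →ₗ[R] P :=
  mul' R P ∘ₗ map γ ((leftExtend P γi).restrictScalars R ∘ₗ F) ∘ₗ
    (TensorProduct.assoc R C C X).toLinearMap ∘ₗ comul.rTensor X

theorem hat_gaugeCoeff (γ γi : C →ₗ[R] P) {χ : C ⊗[R] X →ₗ[R] X ⊗[R] C}
    {F : C ⊗[R] X →ₗ[R] P ⊗[R] C}
    (hF : IsColinear (tensorCoaction comul χ) (lTensorCoaction P comul) F) (b : C) (x : X) :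
    hat χ (gaugeCoeff γ γi F) (b ⊗ₜ x) = gaugeMap γi (rightOp F x (gaugeMap γ (1 ⊗ₜ b))) := by
  set G : C ⊗[R] X →ₗ[R] P ⊗[R] C := (gaugeMap γi).restrictScalars R ∘ₗ
    (leftExtend P F).restrictScalars R ∘ₗ (TensorProduct.assoc R P C X).toLinearMap ∘ₗ
      (γ.rTensor C ∘ₗ comul).rTensor X with hG_def
  have hG : IsColinear (tensorCoaction comul χ) (lTensorCoaction P comul) G :=
    (isColinear_gaugeMap γi).comp ((isColinear_leftExtend hF).comp
      ((isColinear_assoc P comul χ).comp (isColinear_rTensor_comp_comul γ).rTensor))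
  have hG_counit : cofreeCounit R C P ∘ₗ G = gaugeCoeff γ γi F := by
    have h : (TensorProduct.assoc R P C X).toLinearMap ∘ₗ (γ.rTensor C ∘ₗ comul).rTensor X =
        γ.rTensor (C ⊗[R] X) ∘ₗ (TensorProduct.assoc R C C X).toLinearMap ∘ₗ comul.rTensor X := by
      simp [coassoc_simps]
    rw [hG_def, h, gaugeCoeff, ← comp_assoc _ (map γ _) (mul' R P), mul'_comp_map]
    refine LinearMap.ext fun t ↦ ?_
    simp only [comp_apply, coe_restrictScalars, cofreeCounit_gaugeMap]
    exact DFunLike.congr_fun (comp_leftExtend F (leftExtend P γi)) _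
  rw [hat, ← hG_counit, ← hG.eq_rTensor_comp]
  simp [hG_def, leftExtend_assoc, gaugeMap]

variable {ψ : C ⊗[R] P →ₗ[R] P ⊗[R] C} {ψC : C ⊗[R] C →ₗ[R] C ⊗[R] C} {ρ : C ⊗[R] P →ₗ[R] P}
  {σ : C ⊗[R] C →ₗ[R] P} {γ : C →ₗ[R] P}

variable (ψ ρ σ γ) in
/-- The map `(a ⊗ b) ⊗ c ↦ ρ(a ⊗ γ(c₍₁₎)_α) σ(b^α ⊗ c₍₂₎)`. -/
def cocycleCoeff : (C ⊗[R] C) ⊗[R] C →ₗ[R] P :=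
  mul' R P ∘ₗ map ρ σ ∘ₗ (TensorProduct.assoc R C P (C ⊗[R] C)).symm.toLinearMap ∘ₗ
    ((TensorProduct.assoc R P C C).toLinearMap ∘ₗ ψ.rTensor C ∘ₗ
      (TensorProduct.assoc R C P C).symm.toLinearMap ∘ₗ
        (γ.rTensor C ∘ₗ comul).lTensor C).lTensor C ∘ₗ
          (TensorProduct.assoc R C C C).toLinearMap

theorem leftExtend_comp_cocycleCoeff (γi : C →ₗ[R] P) :
    (leftExtend P γi).restrictScalars R ∘ₗ (cocycleCoeff ψ ρ σ γ).rTensor C ∘ₗ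
        (TensorProduct.assoc R (C ⊗[R] C) C C).symm.toLinearMap ∘ₗ
          (TensorProduct.assoc R C C (C ⊗[R] C)).symm.toLinearMap =
      mul' R P ∘ₗ map ρ (mul' R P) ∘ₗ (TensorProduct.assoc R C P (P ⊗[R] P)).symm.toLinearMap ∘ₗ
        (map .id (map σ γi ∘ₗ (TensorProduct.assoc R C C C).symm.toLinearMap) ∘ₗ
          (TensorProduct.assoc R P C (C ⊗[R] C)).toLinearMap ∘ₗ ψ.rTensor (C ⊗[R] C) ∘ₗ
            (TensorProduct.assoc R C P (C ⊗[R] C)).symm.toLinearMap ∘ₗ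
              (map γ .id ∘ₗ (TensorProduct.assoc R C C C).toLinearMap ∘ₗ
                comul.rTensor C).lTensor C).lTensor C := by
  ext a b c d
  simp only [cocycleCoeff, LinearEquiv.comp_coe, AlgebraTensorModule.curry_apply,
    restrictScalars_self, curry_apply, coe_comp, coe_restrictScalars, LinearEquiv.coe_coe,
    Function.comp_apply, LinearEquiv.trans_apply, assoc_symm_tmul, rTensor_tmul, assoc_tmul,
    lTensor_tmul, leftExtend_tmul, smul_eq_mul]
  induction comul (R := R) c with
  | zero => simp
  | add s t hs ht => simp only [tmul_add, add_tmul, map_add, add_mul, hs, ht]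
  | tmul c₁ c₂ =>
    simp only [rTensor_tmul, assoc_symm_tmul, assoc_tmul, map_tmul, id_coe, id_eq]
    induction ψ (b ⊗ₜ γ c₁) with
    | zero => simp
    | add s t hs ht => simp only [tmul_add, add_tmul, map_add, add_mul, hs, ht]
    | tmul p b' => simp [mul_assoc]

variable (ψ ψC ρ σ γ) in
/-- The map `b ⊗ c ↦ (1 ⊗ b) · (γ(c₍₁₎) ⊗ c₍₂₎)`, a product in `P ×_{ρ,σ} C`. -/
def mulGauge : C ⊗[R] C →ₗ[R] P ⊗[R] C :=
  (leftExtend P (hat ψC σ)).restrictScalars R ∘ₗ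
    (TensorProduct.assoc R P C C).toLinearMap ∘ₗ (hat ψ ρ).rTensor C ∘ₗ
      (TensorProduct.assoc R C P C).symm.toLinearMap ∘ₗ (γ.rTensor C ∘ₗ comul).lTensor C

theorem mulGauge_tmul (b c : C) :
    mulGauge ψ ψC ρ σ γ (b ⊗ₜ c) = crossedMul (rightOp (hat ψ ρ))
      (rightOp (hat ψC σ)) (gaugeMap γ (1 ⊗ₜ c)) (1 ⊗ₜ b) := by
  simp [mulGauge, gaugeMap, leftExtend_assoc_rTensor]

theorem isColinear_mulGauge
    (hψ : IsColinear (tensorCoaction comul ψ) (lTensorCoaction P comul) ψ)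
    (hψC : IsColinear (tensorCoaction comul ψC) (lTensorCoaction C comul) ψC)
    (hγ : entwineTensor ψ ψC ∘ₗ (γ.rTensor C ∘ₗ comul).lTensor C =
      (γ.rTensor C ∘ₗ comul).rTensor C ∘ₗ ψC) :
    IsColinear (tensorCoaction comul ψC) (lTensorCoaction P comul) (mulGauge ψ ψC ρ σ γ) :=
  (isColinear_leftExtend (isColinear_hat hψC σ)).comp <|
    (isColinear_assoc P comul ψC).comp <| (isColinear_hat hψ ρ).rTensor.comp <|
      (isColinear_assoc_symm comul ψ ψC).comp <| isColinear_lTensor comul hγ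

theorem cofreeCounit_comp_mulGauge
    (hψC : cofreeCounit R C C ∘ₗ ψC =
      (TensorProduct.lid R C).toLinearMap ∘ₗ (counit (R := R) (A := C)).rTensor C) :
    cofreeCounit R C P ∘ₗ mulGauge ψ ψC ρ σ γ = cocycleCoeff ψ ρ σ γ ∘ₗ comul.rTensor C := by
  have hσ : cofreeCounit R C P ∘ₗ (leftExtend P (hat ψC σ)).restrictScalars R =
      (leftExtend P σ).restrictScalars R :=
    LinearMap.ext fun t ↦ by
      rw [comp_apply, coe_restrictScalars, cofreeCounit_leftExtend, cofreeCounit_comp_hat hψC,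
        coe_restrictScalars]
  have hρ := congrArg (fun f ↦ (leftExtend P σ).restrictScalars R ∘ₗ f ∘ₗ
    (γ.rTensor C ∘ₗ comul).lTensor C) (assoc_comp_rTensor_hat (V := C) ψ ρ)
  rw [mulGauge, ← comp_assoc, hσ, cocycleCoeff, ← comp_assoc _ (map ρ σ), mul'_comp_map]
  simpa [coassoc_simps] using hρ

end GaugeMap

section GaugeData

variable {k : Type} [Field k] {P : Type} [Ring P] [Algebra k P]
  {C : Type} [AddCommGroup C] [Module k C] [Coalgebra k C]
  {ψ : C ⊗[k] P →ₗ[k] P ⊗[k] C} {e : C} {ψC : C ⊗[k] C →ₗ[k] C ⊗[k] C}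
  {ρ : C ⊗[k] P →ₗ[k] P} {σ : C ⊗[k] C →ₗ[k] P} {γ γi : C →ₗ[k] P}

theorem thetaGamma_apply (v : P ⊗[k] C) : ThetaGamma k P C γ v = gaugeMap γ v := by
  rw [gaugeMap, ← mulPC_map_id]
  simp [ThetaGamma, coassoc_simps]

theorem rhoGamma_eq : rhoGamma k P C ψ ρ γ γi = gaugeCoeff γ γi (rhat k P C ψ ρ) := by
  have h := mul'_comp_map ρ γi
  simp only [rTensor_def] at h
  rw [gaugeCoeff, rhat, ← comp_assoc _ (map ρ .id), ← h]
  simp [rhoGamma, coassoc_simps]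

theorem sigmaGamma_eq :
    sigmaGamma k P C ψ ψC ρ σ γ γi =
      gaugeCoeff γ γi (hat ψC (cocycleCoeff ψ ρ σ γ ∘ₗ (Δ k C).rTensor C)) := by
  have h := congrArg (fun f ↦ f ∘ₗ
      (ψC.lTensor C ∘ₗ (TensorProduct.assoc k C C C).toLinearMap ∘ₗ (Δ k C).rTensor C).lTensor C ∘ₗ
        (TensorProduct.assoc k C C C).toLinearMap ∘ₗ (Δ k C).rTensor C)
    (leftExtend_comp_cocycleCoeff (ψ := ψ) (ρ := ρ) (σ := σ) (γ := γ) γi)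
  simp only [comp_assoc] at h
  rw [gaugeCoeff, hat_comp_rTensor_comul, h]
  simp [sigmaGamma, coassoc_simps]

theorem IsEntwining.isColinear (hψ : IsEntwining k P C ψ) :
    IsColinear (tensorCoaction (Δ k C) ψ) (lTensorCoaction P (Δ k C)) ψ :=
  isColinear_of_comul hψ.2.2.1

theorem IsEntwiningData.isColinear (hdata : IsEntwiningData k P C ψ e ψC) :
    IsColinear (tensorCoaction (Δ k C) ψC) (lTensorCoaction C (Δ k C)) ψC :=
  isColinear_of_comul hdata.2.2.1

theorem Cov216.entwineTensor_comp (hcov : Cov216 k P C ψ ψC γ) :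
    entwineTensor ψ ψC ∘ₗ (γ.rTensor C ∘ₗ Δ k C).lTensor C =
      (γ.rTensor C ∘ₗ Δ k C).rTensor C ∘ₗ ψC := by
  have h := congrArg (fun f ↦ (TensorProduct.assoc k P C C).symm.toLinearMap ∘ₗ f) hcov
  simpa [entwineTensor, tensorCoaction, lTensorCoaction, coassoc_simps] using h

theorem IsEntwiningData.isColinear_mulGauge (hdata : IsEntwiningData k P C ψ e ψC)
    (hcov : Cov216 k P C ψ ψC γ) :
    IsColinear (tensorCoaction (Δ k C) ψC) (lTensorCoaction P (Δ k C)) (mulGauge ψ ψC ρ σ γ) :=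
  Entwine.isColinear_mulGauge hdata.1.isColinear hdata.isColinear hcov.entwineTensor_comp

theorem hat_cocycleCoeff (hdata : IsEntwiningData k P C ψ e ψC) (hcov : Cov216 k P C ψ ψC γ) :
    hat ψC (cocycleCoeff ψ ρ σ γ ∘ₗ (Δ k C).rTensor C) = mulGauge ψ ψC ρ σ γ := by
  rw [hat, ← cofreeCounit_comp_mulGauge hdata.2.2.2.1,
    ← (hdata.isColinear_mulGauge hcov).eq_rTensor_comp]

section Transport

open WithConv

variable (h : toConv γ * toConv γi = 1) (h' : toConv γi * toConv γ = 1)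
include h h'

theorem rightOp_rhat_rhoGamma (hdata : IsEntwiningData k P C ψ e ψC) (hσ : CondIV k P C e ψC σ)
    (hγe : γ e = 1) (x : P) :
    rightOp (rhat k P C ψ (rhoGamma k P C ψ ρ γ γi)) x =
      pullbackMul (gaugeEquiv γ γi h h') (crossedProduct ψ ψC ρ σ) (x ⊗ₜ e) := by
  refine leftExtend_ext fun b ↦ ?_
  have hx : gaugeEquiv γ γi h h' (x ⊗ₜ e) = x ⊗ₜ e :=
    gaugeMap_tmul_of_comul hdata.2.1.1 hγe x
  rw [rightOp_tmul, one_smul, pullbackMul_apply, hx, crossedMul_tmul,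
    ((condIV_iff hdata).1 hσ).2, one_mul, rhoGamma_eq]
  exact hat_gaugeCoeff γ γi (isColinear_hat hdata.1.isColinear ρ) b x

theorem rightOp_shat_sigmaGamma (hdata : IsEntwiningData k P C ψ e ψC)
    (hcov : Cov216 k P C ψ ψC γ) (c : C) :
    rightOp (shat k P C ψC (sigmaGamma k P C ψ ψC ρ σ γ γi)) c =
      pullbackMul (gaugeEquiv γ γi h h') (crossedProduct ψ ψC ρ σ) (1 ⊗ₜ c) := by
  have hmul : rightOp (mulGauge ψ ψC ρ σ γ) c =
      crossedProduct ψ ψC ρ σ (gaugeMap γ (1 ⊗ₜ c)) :=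
    leftExtend_ext fun b ↦ by
      rw [rightOp_tmul, one_smul, mulGauge_tmul]
      rfl
  refine leftExtend_ext fun b ↦ ?_
  calc rightOp (shat k P C ψC (sigmaGamma k P C ψ ψC ρ σ γ γi)) c (1 ⊗ₜ b)
      = hat ψC (gaugeCoeff γ γi (mulGauge ψ ψC ρ σ γ)) (b ⊗ₜ c) := by
        rw [rightOp_tmul, one_smul, sigmaGamma_eq, hat_cocycleCoeff hdata hcov]
        rfl
    _ = gaugeMap γi (rightOp (mulGauge ψ ψC ρ σ γ) c (gaugeMap γ (1 ⊗ₜ b))) :=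
        hat_gaugeCoeff γ γi (hdata.isColinear_mulGauge hcov) b c
    _ = _ := by
        rw [hmul]
        rfl

end Transport

end GaugeData

/-- (Proposition 3.1) A gauge transformation `γ` transforms crossed
product data `(ρ, σ)` into crossed product data `(ρ^γ, σ^γ)`, and
`Θ(x ⊗ c) = xγ(c₍₁₎) ⊗ c₍₂₎` is an algebra isomorphism
`M ×_{ρ^γ,σ^γ} C ≅ M ×_{ρ,σ} C`. -/
theorem gauge_transform
    (k : Type) [Field k] (P : Type) [Ring P] [Algebra k P]
    (C : Type) [AddCommGroup C] [Module k C] [Coalgebra k C]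
    (ψ : C ⊗[k] P →ₗ[k] P ⊗[k] C) (e : C) (ψC : C ⊗[k] C →ₗ[k] C ⊗[k] C)
    (ρ : C ⊗[k] P →ₗ[k] P) (σ : C ⊗[k] C →ₗ[k] P) (γ γi : C →ₗ[k] P)
    (hdata : IsEntwiningData k P C ψ e ψC)
    (hcross : IsCrossedData k P C ψ e ψC ρ σ)
    (hcoc : Cocycle k P C ψ ψC ρ σ)
    (htw : Twisted k P C ψ e ψC ρ σ)
    (hγM : ∀ c : C, γ c ∈ Msub k P C ψ e)
    (hγiM : ∀ c : C, γi c ∈ Msub k P C ψ e)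
    (hconv : (μ k P ∘ₗ map γ γi ∘ₗ Δ k C = Algebra.linearMap k P ∘ₗ ε k C) ∧
      (μ k P ∘ₗ map γi γ ∘ₗ Δ k C = Algebra.linearMap k P ∘ₗ ε k C))
    (hγe : γ e = 1)
    (hcov : Cov216 k P C ψ ψC γ) :
    IsCrossedData k P C ψ e ψC (rhoGamma k P C ψ ρ γ γi)
        (sigmaGamma k P C ψ ψC ρ σ γ γi) ∧
    Cocycle k P C ψ ψC (rhoGamma k P C ψ ρ γ γi)
        (sigmaGamma k P C ψ ψC ρ σ γ γi) ∧
    Twisted k P C ψ e ψC (rhoGamma k P C ψ ρ γ γi)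
        (sigmaGamma k P C ψ ψC ρ σ γ γi) ∧
    Set.MapsTo (ThetaGamma k P C γ) (MCsub k P C ψ e) (MCsub k P C ψ e) ∧
    Function.Bijective (ThetaGamma k P C γ) ∧
    ThetaGamma k P C γ ((1 : P) ⊗ₜ e) = (1 : P) ⊗ₜ[k] e ∧
    (∀ u ∈ MCsub k P C ψ e, ∀ v ∈ MCsub k P C ψ e,
      ThetaGamma k P C γ
          (prodX k P C ψ ψC (rhoGamma k P C ψ ρ γ γi)
            (sigmaGamma k P C ψ ψC ρ σ γ γi) (u ⊗ₜ v)) =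
        prodX k P C ψ ψC ρ σ (ThetaGamma k P C γ u ⊗ₜ ThetaGamma k P C γ v)) := by
  have h : WithConv.toConv γ * WithConv.toConv γi = 1 := congrArg WithConv.toConv hconv.1
  have h' : WithConv.toConv γi * WithConv.toConv γ = 1 := congrArg WithConv.toConv hconv.2
  set Θ := gaugeEquiv γ γi h h'
  have hΘ : ⇑(ThetaGamma k P C γ) = Θ := funext thetaGamma_apply
  have hΘ_maps : ∀ v ∈ MCsub k P C ψ e, Θ v ∈ MCsub k P C ψ e :=
    fun v ↦ gaugeMap_mem_coeffSubmodule (M := fixedSubalgebra hdata.1 e) hγM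
  have hΘe : Θ (1 ⊗ₜ e) = 1 ⊗ₜ e := gaugeMap_tmul_of_comul hdata.2.1.1 hγe 1
  have hmul : IsCrossedMul (fixedSubalgebra hdata.1 e) e
      (pullbackMul Θ (crossedProduct ψ ψC ρ σ)) :=
    ((isCrossedPair_iff hdata).2 ⟨hcross, hcoc, htw⟩).isCrossedMul.pullback Θ hΘ_maps
      (fun v ↦ gaugeMap_mem_coeffSubmodule hγiM) hΘe
  have hρ := rightOp_rhat_rhoGamma (ρ := ρ) h h' hdata hcross.2.2.2.2 hγe
  have hσ := rightOp_shat_sigmaGamma (ρ := ρ) (σ := σ) h h' hdata hcov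
  obtain ⟨hcross', hcoc', htw'⟩ := (isCrossedPair_iff hdata).1 (hmul.isCrossedPair hρ hσ)
  refine ⟨hcross', hcoc', htw', hΘ ▸ hΘ_maps, hΘ ▸ Θ.bijective, by rw [hΘ, hΘe], ?_⟩
  intro u _ v hv
  rw [prodX_tmul, prodX_tmul, hmul.crossedMul_eqOn hρ hσ hv, hΘ, pullbackMul_apply,
    Θ.apply_symm_apply]

end Entwine
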